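/- Let d ≥ 3 and let q_1, …, q_d be pairwise coprime positive integers. Assume the Γ-periodic potentials V, Y : ℤ^d → ℝ are Fermi isospectral and that Y = ⊕_{j=1}^r Y_j is (d_1,…,d_r) separable. Then V = ⊕_{j=1}^r V_j is (d_1,…,d_r) separable, and moreover for each j = 1,…,r there exists a constant C_j ∈ ℝ such that V_j + C_j and Y_j are Floquet isospectral as Γ_j-periodic potentials on ℤ^{d_j}. -/

import Mathlib

open scoped BigOperators
open Complex

noncomputable section

/-- The fundamental domain `W` for `Γ = q₁ℤ ⊕ ⋯ ⊕ q_dℤ`, as a type. -/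
abbrev Cell (d : ℕ) (q : Fin d → ℕ) := (j : Fin d) → Fin (q j)

/-- `V : ℤ^d → ℝ` is `Γ`-periodic for `Γ = q₁ℤ ⊕ ⋯ ⊕ q_dℤ`. -/
def IsPeriodicPotential (d : ℕ) (q : Fin d → ℕ) (V : (Fin d → ℤ) → ℝ) : Prop :=
  ∀ n γ : Fin d → ℤ, (∀ j, (q j : ℤ) ∣ γ j) → V (n + γ) = V n

/-- The discrete Fourier transform `V̂(l)`, defined for all `l ∈ ℤ^d`
(it is automatically `Γ`-periodic in `l`). -/
def dft (d : ℕ) (q : Fin d → ℕ) (V : (Fin d → ℤ) → ℝ) (l : Fin d → ℤ) : ℂ :=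
  (1 / ∏ j, (q j : ℂ)) *
    ∑ n : Cell d q, (V (fun j => ((n j : ℕ) : ℤ)) : ℂ) *
      Complex.exp (-(2 * Real.pi * Complex.I) * ∑ j, (l j : ℂ) * ((n j : ℕ) : ℂ) / (q j : ℂ))

/-- `ρ^j_m = e^{2πi m/q_j}`. -/
def rho (d : ℕ) (q : Fin d → ℕ) (j : Fin d) (m : ℤ) : ℂ :=
  Complex.exp (2 * Real.pi * Complex.I * (m : ℂ) / (q j : ℂ))

/-- The Floquet matrix `M_V(z)` (the matrix `A + B_V` of Lemma 2.7). -/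
def floquetMatrix (d : ℕ) (q : Fin d → ℕ) (V : (Fin d → ℤ) → ℝ) (z : Fin d → ℂ) :
    Matrix (Cell d q) (Cell d q) ℂ := fun n n' =>
  (if n = n' then ∑ j, (rho d q j (n j : ℕ) * z j + (rho d q j (n j : ℕ) * z j)⁻¹) else 0)
    + dft d q V (fun j => ((n j : ℕ) : ℤ) - ((n' j : ℕ) : ℤ))

/-- `P̃_V(z, λ) = det (M_V(z) − λ I)`. -/
def floquetDet (d : ℕ) (q : Fin d → ℕ) (V : (Fin d → ℤ) → ℝ) (z : Fin d → ℂ) (lam : ℂ) : ℂ :=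
  Matrix.det (floquetMatrix d q V z - lam • (1 : Matrix (Cell d q) (Cell d q) ℂ))

/-- `V` and `Y` are Fermi isospectral. -/
def FermiIsospectral (d : ℕ) (q : Fin d → ℕ) (V Y : (Fin d → ℤ) → ℝ) : Prop :=
  ∃ lam0 : ℂ,
    {z : Fin d → ℂ | (∀ j, z j ≠ 0) ∧ floquetDet d q V z lam0 = 0}
      = {z : Fin d → ℂ | (∀ j, z j ≠ 0) ∧ floquetDet d q Y z lam0 = 0}

/-- `V` and `Y` are Floquet isospectral. -/
def FloquetIsospectral (d : ℕ) (q : Fin d → ℕ) (V Y : (Fin d → ℤ) → ℝ) : Prop :=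
  ∀ z : Fin d → ℂ, (∀ j, z j ≠ 0) → ∀ lam : ℂ,
    floquetDet d q V z lam = floquetDet d q Y z lam

/-- The average `[V]` of `V` over one periodicity cell. -/
def potentialAvg (d : ℕ) (q : Fin d → ℕ) (V : (Fin d → ℤ) → ℝ) : ℝ :=
  (1 / ∏ j, (q j : ℝ)) * ∑ n : Cell d q, V (fun j => ((n j : ℕ) : ℤ))

/-- The embedding of the `j`-th block of coordinates into `Fin d`,
given block sizes `D : Fin r → ℕ` with `∑ j, D j = d`. -/
def blockEmbed {r d : ℕ} (D : Fin r → ℕ) (hsum : ∑ j, D j = d) (j : Fin r) (i : Fin (D j)) :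
    Fin d :=
  ⟨(∑ k ∈ Finset.univ.filter (fun k => k < j), D k) + i.1, by
    have hj : j ∉ Finset.univ.filter (fun k => k < j) := by simp
    have h2 : (∑ k ∈ Finset.univ.filter (fun k => k < j), D k) + D j ≤ ∑ k, D k := by
      calc (∑ k ∈ Finset.univ.filter (fun k => k < j), D k) + D j
          = ∑ k ∈ insert j (Finset.univ.filter (fun k => k < j)), D k := by
            rw [Finset.sum_insert hj, add_comm]
        _ ≤ ∑ k, D k := Finset.sum_le_sum_of_subset (Finset.subset_univ _)
    have h3 := i.2
    omega⟩

/-- `V` is `(D 0, …, D (r-1))` separable. -/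
def IsSeparablePotential {r : ℕ} (d : ℕ) (D : Fin r → ℕ) (hsum : ∑ j, D j = d)
    (V : (Fin d → ℤ) → ℝ) : Prop :=
  ∃ Vj : (j : Fin r) → (Fin (D j) → ℤ) → ℝ,
    ∀ n : Fin d → ℤ, V n = ∑ j, Vj j (fun i => n (blockEmbed D hsum j i))

/-!
Replacing `z` by `s • a + b` and letting `s → ∞` degenerates the Floquet matrix: after division by
`s` it tends to the diagonal matrix of the numbers `phase n ⬝ᵥ a`, which are pairwise distinct for
generic `a` because the periods are coprime.

In one coordinate `w` the Floquet determinant is a Laurent polynomial with all zeros, for large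
`s`, simple and close to known points. Hence an inclusion of the Fermi varieties at one energy
forces the two determinants to agree at that energy. Degenerations along special directions `a`
then isolate minors of the Floquet matrix. A direction killing only `phase n` and `phase 0` gives
`|V̂ n| = |Ŷ n|` for mixed frequencies `n`, and mixed Fourier coefficients vanish exactly for
separable potentials. A direction supported outside a block and orthogonal to `1` gives Floquet
isospectrality of the averages over the coordinates outside the block, provided there are at least
two of them.

If a single coordinate `w` lies outside the block, `V` and `Y` are sums of two potentials and the
determinant factors as `∏ (E + f x)` over the eigenvalues `x` of the block, where `E` is a function
of `w` taking all values and `f` is a polynomial that does not depend on `w`. The numbers `f x` are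
therefore determined, and `f` separates the eigenvalues along generic rays.
-/

open Polynomial Filter Topology

section PolynomialMatrix

variable {W R : Type*} [Fintype W] [DecidableEq W] [CommRing R]

theorem natDegree_det_le {M : Matrix W W R[X]} {k : ℕ} (hM : ∀ i j, (M i j).natDegree ≤ k) :
    M.det.natDegree ≤ Fintype.card W * k := by
  rw [Matrix.det_apply]
  refine natDegree_sum_le_of_forall_le _ _ fun σ _ => (natDegree_smul_le _ _).trans ?_
  refine (natDegree_prod_le _ _).trans ?_
  simpa using Finset.sum_le_card_nsmul Finset.univ _ k fun i _ => hM (σ i) i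

theorem coeff_det_of_natDegree_le {M : Matrix W W R[X]} {k : ℕ}
    (hM : ∀ i j, (M i j).natDegree ≤ k) :
    M.det.coeff (Fintype.card W * k) = (M.map (coeff · k)).det := by
  rw [Matrix.det_apply, Matrix.det_apply, finsetSum_coeff]
  refine Finset.sum_congr rfl fun σ _ => ?_
  rw [coeff_smul, ← Finset.card_univ,
    coeff_prod_of_natDegree_le _ (fun i => M (σ i) i) k fun i _ => hM (σ i) i]
  rfl

end PolynomialMatrix

section QuadraticPencil

variable {W R : Type*} [DecidableEq W] [CommRing R] (c e : W → R) (B : Matrix W W R)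

/-- The quadratic matrix pencil `diag(c) X² + B X + diag(e)`. -/
def quadraticPencil : Matrix W W R[X] :=
  Matrix.diagonal (fun n => C (c n) * X ^ 2 + C (e n)) + (X : R[X]) • B.map C

theorem natDegree_quadraticPencil_le (n m : W) : (quadraticPencil c e B n m).natDegree ≤ 2 := by
  obtain rfl | h := eq_or_ne n m
  · simp only [quadraticPencil, Matrix.add_apply, Matrix.diagonal_apply_eq, Matrix.smul_apply,
      Matrix.map_apply, smul_eq_mul]
    compute_degree
  · simp only [quadraticPencil, Matrix.add_apply, Matrix.diagonal_apply_ne _ h, Matrix.smul_apply,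
      Matrix.map_apply, smul_eq_mul]
    compute_degree!

variable [Fintype W]

theorem eval_det_quadraticPencil (w : R) :
    (quadraticPencil c e B).det.eval w =
      (Matrix.diagonal (fun n => c n * w ^ 2 + e n) + w • B).det := by
  rw [quadraticPencil, ← coe_evalRingHom, RingHom.map_det]
  congr 1
  ext n m
  by_cases h : n = m <;> simp [h, mul_comm w]

theorem natDegree_det_quadraticPencil_le :
    (quadraticPencil c e B).det.natDegree ≤ Fintype.card W * 2 :=
  natDegree_det_le (natDegree_quadraticPencil_le c e B)

theorem coeff_det_quadraticPencil :
    (quadraticPencil c e B).det.coeff (Fintype.card W * 2) = ∏ n, c n := by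
  rw [coeff_det_of_natDegree_le (natDegree_quadraticPencil_le c e B), ← Matrix.det_diagonal]
  congr 1
  ext n m
  obtain rfl | h := eq_or_ne n m
  · simp [quadraticPencil]
  · simp [quadraticPencil, h]

theorem degree_det_quadraticPencil_sub_lt (e' : W → R) (B' : Matrix W W R) :
    ((quadraticPencil c e B).det - (quadraticPencil c e' B').det).degree <
      (Fintype.card W * 2 : ℕ) := by
  rw [degree_lt_iff_coeff_zero]
  intro k hk
  rw [coeff_sub, sub_eq_zero]
  obtain hk | rfl := hk.lt_or_eq
  · rw [coeff_eq_zero_of_natDegree_lt ((natDegree_det_quadraticPencil_le _ _ _).trans_lt hk),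
      coeff_eq_zero_of_natDegree_lt ((natDegree_det_quadraticPencil_le _ _ _).trans_lt hk)]
  · rw [coeff_det_quadraticPencil, coeff_det_quadraticPencil]

end QuadraticPencil

section Roots

theorem exists_root_norm_sub_pow_le {p : ℂ[X]} (hp : p.natDegree ≠ 0) (u : ℂ) :
    ∃ x, p.IsRoot x ∧ ‖p.leadingCoeff‖ * ‖x - u‖ ^ p.natDegree ≤ ‖p.eval u‖ := by
  have hsplit := IsAlgClosed.splits p
  obtain ⟨x, hx, hmin⟩ : ∃ x ∈ p.roots.toFinset, ∀ y ∈ p.roots.toFinset, ‖u - x‖ ≤ ‖u - y‖ := by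
    refine Finset.exists_min_image _ (fun y => ‖u - y‖) ?_
    rw [Multiset.toFinset_nonempty, ← Multiset.card_pos, ← hsplit.natDegree_eq_card_roots]
    exact Nat.pos_of_ne_zero hp
  simp only [Multiset.mem_toFinset] at hx hmin
  refine ⟨x, isRoot_of_mem_roots hx, ?_⟩
  have hnorm : ‖p.eval u‖ = ‖p.leadingCoeff‖ * (p.roots.map fun y => ‖u - y‖).prod := by
    rw [hsplit.eval_eq_prod_roots, norm_mul]
    exact congrArg _ (Multiset.prod_hom' p.roots (normHom : ℂ →*₀ ℝ) fun y => u - y).symm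
  rw [hnorm, norm_sub_rev, hsplit.natDegree_eq_card_roots]
  gcongr
  simpa using Multiset.prod_map_le_prod_map₀ (fun _ => ‖u - x‖) (fun y => ‖u - y‖)
    (fun _ _ => norm_nonneg _) hmin

theorem exists_root_tendsto {ι : Type*} {l : Filter ι} {P : ι → ℂ[X]} {N : ℕ} {a u : ℂ}
    (hN : N ≠ 0) (ha : a ≠ 0) (hdeg : ∀ s, (P s).natDegree = N)
    (hlead : ∀ s, (P s).leadingCoeff = a) (hu : Tendsto (fun s => (P s).eval u) l (𝓝 0)) :
    ∃ x : ι → ℂ, (∀ s, (P s).IsRoot (x s)) ∧ Tendsto x l (𝓝 u) := by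
  choose x hroot hle using fun s => exists_root_norm_sub_pow_le (p := P s) (by rwa [hdeg]) u
  refine ⟨x, hroot, tendsto_iff_norm_sub_tendsto_zero.2 ?_⟩
  have hpow : Tendsto (fun s => ‖x s - u‖ ^ N) l (𝓝 0) := by
    refine squeeze_zero (fun s => by positivity) (fun s => ?_)
      (by simpa using hu.norm.div_const ‖a‖)
    rw [le_div_iff₀' (norm_pos_iff.2 ha)]
    simpa only [hdeg, hlead] using hle s
  have hroot := hpow.rpow_const (p := (N : ℝ)⁻¹) (Or.inr (by positivity))
  rw [Real.zero_rpow (by positivity)] at hroot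
  exact hroot.congr fun s => Real.pow_rpow_inv_natCast (norm_nonneg _) hN

end Roots

section LaurentPencil

variable {W : Type*} [Fintype W] [DecidableEq W]

/-- The determinant of the pencil `diag(c w + (c w)⁻¹) + B`, a Laurent polynomial in `w`; with all
but one quasimomentum fixed, the Floquet determinant has this form. -/
def laurentDet (c : W → ℂ) (B : Matrix W W ℂ) (w : ℂ) : ℂ :=
  (Matrix.diagonal (fun n => c n * w + (c n * w)⁻¹) + B).det

variable {c : W → ℂ}

theorem laurentDet_inv (c : W → ℂ) (B : Matrix W W ℂ) (w : ℂ) :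
    laurentDet c⁻¹ B w = laurentDet c B w⁻¹ := by
  simp only [laurentDet, Pi.inv_apply, mul_inv, inv_inv, add_comm]

theorem eval_det_quadraticPencil_scaled (hc : ∀ n, c n ≠ 0) (B : Matrix W W ℂ) {s w : ℂ}
    (hs : s ≠ 0) (hw : w ≠ 0) :
    (quadraticPencil c (fun n => (c n)⁻¹ * s⁻¹ ^ 2) (s⁻¹ • B)).det.eval w =
      (w * s⁻¹) ^ Fintype.card W * laurentDet c B (s * w) := by
  rw [eval_det_quadraticPencil, laurentDet, ← Matrix.det_smul, smul_add, ← Matrix.diagonal_smul,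
    smul_smul]
  congr 3
  ext n
  have := hc n
  simp only [Pi.smul_apply, smul_eq_mul]
  field_simp

theorem eval_det_quadraticPencil_inv (hc : ∀ n, c n ≠ 0) (B : Matrix W W ℂ) {w : ℂ}
    (hw : w ≠ 0) :
    (quadraticPencil c (fun n => (c n)⁻¹) B).det.eval w =
      w ^ Fintype.card W * laurentDet c B w := by
  simpa using eval_det_quadraticPencil_scaled hc B one_ne_zero hw

theorem laurentDet_eq_of_card_zeros {ι : Type*} [Fintype ι]
    (hι : Fintype.card ι = Fintype.card W * 2) (hc : ∀ n, c n ≠ 0) {B₁ B₂ : Matrix W W ℂ}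
    {w : ι → ℂ} (hinj : Function.Injective w) (hw : ∀ i, w i ≠ 0)
    (h₁ : ∀ i, laurentDet c B₁ (w i) = 0)
    (h₂ : ∀ i, laurentDet c B₂ (w i) = 0) {x : ℂ} (hx : x ≠ 0) :
    laurentDet c B₁ x = laurentDet c B₂ x := by
  have hpoly : (quadraticPencil c (fun n => (c n)⁻¹) B₁).det =
      (quadraticPencil c (fun n => (c n)⁻¹) B₂).det := by
    refine eq_of_degree_sub_lt_of_eval_finset_eq (Finset.univ.image w) ?_ ?_
    · rw [Finset.card_image_of_injective _ hinj, Finset.card_univ, hι]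
      exact degree_det_quadraticPencil_sub_lt _ _ _ _ _
    · simp only [Finset.mem_image, Finset.mem_univ, true_and, forall_exists_index,
        forall_apply_eq_imp_iff]
      intro i
      rw [eval_det_quadraticPencil_inv hc _ (hw i), eval_det_quadraticPencil_inv hc _ (hw i), h₁,
        h₂]
  have hx' := congrArg (eval x) hpoly
  rw [eval_det_quadraticPencil_inv hc _ hx, eval_det_quadraticPencil_inv hc _ hx] at hx'
  exact mul_left_cancel₀ (pow_ne_zero _ hx) hx'

theorem tendsto_inv_ofReal_atTop : Tendsto (fun s : ℝ => (s : ℂ)⁻¹) atTop (𝓝 0) := by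
  simpa [Function.comp_def] using
    (Complex.continuous_ofReal.tendsto 0).comp tendsto_inv_atTop_zero

variable {l : W → ℂ} {B : ℝ → Matrix W W ℂ}

theorem exists_zeros_pencil_tendsto (hc : ∀ n, c n ≠ 0)
    (hB : Tendsto (fun s : ℝ => (s : ℂ)⁻¹ • B s) atTop (𝓝 (Matrix.diagonal l))) (n : W) :
    ∃ x : ℝ → ℂ, (∀ s : ℝ, (quadraticPencil c (fun n => (c n)⁻¹ * (s : ℂ)⁻¹ ^ 2)
      ((s : ℂ)⁻¹ • B s)).det.IsRoot (x s)) ∧ Tendsto x atTop (𝓝 (-(l n / c n))) := by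
  have hprod : ∏ n, c n ≠ 0 := Finset.prod_ne_zero_iff.2 fun n _ => hc n
  have hdeg : ∀ s : ℝ, (quadraticPencil c (fun n => (c n)⁻¹ * (s : ℂ)⁻¹ ^ 2)
      ((s : ℂ)⁻¹ • B s)).det.natDegree = Fintype.card W * 2 := fun s =>
    natDegree_eq_of_le_of_coeff_ne_zero (natDegree_det_quadraticPencil_le _ _ _)
      (by rwa [coeff_det_quadraticPencil])
  have : Nonempty W := ⟨n⟩
  refine exists_root_tendsto (mul_ne_zero Fintype.card_ne_zero two_ne_zero) hprod hdeg
    (fun s => by rw [leadingCoeff, hdeg, coeff_det_quadraticPencil]) ?_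
  have hzero : (Matrix.diagonal (fun m => c m * (-(l n / c n)) ^ 2 + (c m)⁻¹ * 0 ^ 2) +
      (-(l n / c n)) • Matrix.diagonal l).det = 0 := by
    rw [← Matrix.diagonal_smul, Matrix.diagonal_add, Matrix.det_diagonal]
    refine Finset.prod_eq_zero (Finset.mem_univ n) ?_
    have := hc n
    simp only [Pi.smul_apply, smul_eq_mul]
    field_simp
    ring
  simp only [eval_det_quadraticPencil]
  rw [← hzero]
  refine ((continuous_id.matrix_det).tendsto _).comp (Tendsto.add ?_ (hB.const_smul _))
  refine ((continuous_id.matrix_diagonal).tendsto _).comp (tendsto_pi_nhds.2 fun m => ?_)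
  exact ((tendsto_inv_ofReal_atTop.pow 2).const_mul _).const_add _

theorem eventually_exists_large_zeros (hc : ∀ n, c n ≠ 0) (hl : ∀ n, l n ≠ 0)
    (hinj : Function.Injective (l / c))
    (hB : Tendsto (fun s : ℝ => (s : ℂ)⁻¹ • B s) atTop (𝓝 (Matrix.diagonal l))) :
    ∀ᶠ s : ℝ in atTop, ∃ w : W → ℂ, Function.Injective w ∧
      ∀ n, 1 < ‖w n‖ ∧ laurentDet c (B s) (w n) = 0 := by
  choose x hroot hx using exists_zeros_pencil_tendsto hc hB
  have hne : ∀ᶠ s in atTop, ∀ n, x n s ≠ 0 := eventually_all.2 fun n =>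
    (hx n).eventually_ne (neg_ne_zero.2 (div_ne_zero (hl n) (hc n)))
  have hdist : ∀ᶠ s in atTop, ∀ n m, n ≠ m → x n s ≠ x m s :=
    eventually_all.2 fun n => eventually_all.2 fun m => by
      by_cases hnm : n = m
      · simp [hnm]
      · have hlim : -(l n / c n) ≠ -(l m / c m) := fun h => hnm (hinj (neg_injective h))
        filter_upwards [((hx n).sub (hx m)).eventually_ne (sub_ne_zero.2 hlim)] with s hs _
        exact sub_ne_zero.1 hs
  have hlarge : ∀ᶠ s : ℝ in atTop, ∀ n, 1 < ‖(s : ℂ) * x n s‖ := eventually_all.2 fun n => by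
    have hpos : 0 < ‖-(l n / c n)‖ := norm_pos_iff.2 (neg_ne_zero.2 (div_ne_zero (hl n) (hc n)))
    simp only [norm_mul]
    refine Tendsto.eventually_gt_atTop ?_ 1
    exact (by simpa using tendsto_abs_atTop_atTop : Tendsto (fun s : ℝ => ‖(s : ℂ)‖) atTop atTop)
      |>.atTop_mul_pos hpos (hx n).norm
  filter_upwards [hne, hdist, hlarge, eventually_ne_atTop 0] with s hne hdist hlarge hs
  have hs' : (s : ℂ) ≠ 0 := by exact_mod_cast hs
  refine ⟨fun n => s * x n s, fun n m h => ?_, fun n => ⟨hlarge n, ?_⟩⟩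
  · by_contra hnm
    exact hdist n m hnm (mul_left_cancel₀ hs' h)
  · have h := hroot n s
    rw [IsRoot.def, eval_det_quadraticPencil_scaled hc _ hs' (hne n)] at h
    exact (mul_eq_zero.1 h).resolve_left
      (pow_ne_zero _ (mul_ne_zero (hne n) (inv_ne_zero hs')))

theorem eventually_laurentDet_eq_of_zeros_subset {B' : ℝ → Matrix W W ℂ} (hc : ∀ n, c n ≠ 0)
    (hl : ∀ n, l n ≠ 0) (hdiv : Function.Injective (l / c)) (hmul : Function.Injective (l * c))
    (hB : Tendsto (fun s : ℝ => (s : ℂ)⁻¹ • B s) atTop (𝓝 (Matrix.diagonal l)))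
    (hzeros : ∀ᶠ s in atTop, ∀ w ≠ 0, laurentDet c (B s) w = 0 → laurentDet c (B' s) w = 0) :
    ∀ᶠ s in atTop, ∀ w ≠ 0, laurentDet c (B s) w = laurentDet c (B' s) w := by
  have hlarge := eventually_exists_large_zeros hc hl hdiv hB
  have hsmall := eventually_exists_large_zeros (c := c⁻¹) (fun n => inv_ne_zero (hc n)) hl
    (by rwa [div_inv_eq_mul]) hB
  filter_upwards [hlarge, hsmall, hzeros] with s ⟨w₁, hw₁inj, hw₁⟩ ⟨w₂, hw₂inj, hw₂⟩ hzeros x hx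
  have hw₁0 : ∀ n, w₁ n ≠ 0 := fun n => norm_pos_iff.1 (one_pos.trans (hw₁ n).1)
  have hw₂0 : ∀ n, w₂ n ≠ 0 := fun n => norm_pos_iff.1 (one_pos.trans (hw₂ n).1)
  have hw0 : ∀ i, Sum.elim w₁ w₂⁻¹ i ≠ 0 := by
    rintro (n | n)
    exacts [hw₁0 n, inv_ne_zero (hw₂0 n)]
  have hroot : ∀ i, laurentDet c (B s) (Sum.elim w₁ w₂⁻¹ i) = 0 := by
    rintro (n | n)
    · exact (hw₁ n).2
    · rw [Sum.elim_inr, Pi.inv_apply, ← laurentDet_inv]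
      exact (hw₂ n).2
  have hcard : Fintype.card (W ⊕ W) = Fintype.card W * 2 := by rw [Fintype.card_sum, mul_two]
  refine laurentDet_eq_of_card_zeros hcard hc ?_ hw0 hroot (fun i => hzeros _ (hw0 i) (hroot i)) hx
  refine hw₁inj.sumElim (inv_injective.comp hw₂inj) fun n m h => ?_
  have hlt : ‖(w₂ m)⁻¹‖ < 1 := by
    rw [norm_inv]
    exact inv_lt_one_of_one_lt₀ (hw₂ m).1
  refine hlt.not_gt ?_
  rw [← Pi.inv_apply, ← h]
  exact (hw₁ n).1

end LaurentPencil

section GenericRays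

theorem mvPolynomial_eq_zero_of_forall_eval_ne_zero {σ K : Type*} [Field K] [Infinite K]
    {p g : MvPolynomial σ K} (hg : g ≠ 0)
    (h : ∀ a, MvPolynomial.eval a g ≠ 0 → MvPolynomial.eval a p = 0) : p = 0 := by
  refine (mul_eq_zero.1 (MvPolynomial.funext fun a => ?_ : p * g = 0)).resolve_right hg
  by_cases ha : MvPolynomial.eval a g = 0
  · simp [ha]
  · simp [h a ha]

theorem eval_eq_zero_of_eventually_ray {σ : Type*} {p : MvPolynomial σ ℂ} {a : σ → ℂ}
    (h : ∀ᶠ s : ℝ in atTop, MvPolynomial.eval ((s : ℂ) • a) p = 0) :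
    MvPolynomial.eval a p = 0 := by
  let P : ℂ[X] := MvPolynomial.aeval (fun j => C (a j) * X) p
  have heval : ∀ t : ℂ, P.eval t = MvPolynomial.eval (t • a) p := fun t => by
    have hcomp : ((evalRingHom t).comp (algebraMap ℂ ℂ[X])) = RingHom.id ℂ := by ext; simp
    change evalRingHom t (MvPolynomial.aeval (fun j => C (a j) * X) p) = _
    rw [MvPolynomial.aeval_def, MvPolynomial.hom_eval₂, hcomp,
      MvPolynomial.eval₂_id]
    refine congrArg (MvPolynomial.eval · p) (funext fun j => ?_)
    simp only [coe_evalRingHom, eval_mul, eval_C, eval_X, Pi.smul_apply,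
      smul_eq_mul, mul_comm t]
  obtain ⟨s₀, hs₀⟩ := eventually_atTop.1 h
  have hP : P = 0 := by
    refine eq_zero_of_infinite_isRoot _
      (((Set.Ici_infinite s₀).image Complex.ofReal_injective.injOn).mono ?_)
    rintro _ ⟨s, hs, rfl⟩
    exact (heval s).trans (hs₀ s hs)
  simpa [hP] using (heval 1).symm

theorem mvPolynomial_eq_zero_of_generic_rays {σ I : Type*} [Fintype σ] [Finite I]
    {u : I → σ → ℂ} (hu : ∀ i, u i ≠ 0) {p : MvPolynomial σ ℂ}
    (h : ∀ a : σ → ℂ, (∀ i, u i ⬝ᵥ a ≠ 0) →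
      ∀ᶠ s : ℝ in atTop, MvPolynomial.eval ((s : ℂ) • a) p = 0) : p = 0 := by
  classical
  cases nonempty_fintype I
  refine mvPolynomial_eq_zero_of_forall_eval_ne_zero
    (g := ∏ i, ∑ j, MvPolynomial.C (u i j) * MvPolynomial.X j)
    (Finset.prod_ne_zero_iff.2 fun i _ hi => hu i (funext fun k => ?_)) fun a ha => ?_
  · simpa [Pi.single_apply] using congrArg (MvPolynomial.eval (Pi.single k (1 : ℂ))) hi
  · refine eval_eq_zero_of_eventually_ray (h a ?_)
    simpa [Finset.prod_ne_zero_iff, dotProduct] using ha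

end GenericRays

section RootsOfUnity

variable {d : ℕ} {q : Fin d → ℕ}

/-- The vector `(ρ¹_{n₁}, …, ρᵈ_{n_d})` of roots of unity attached to a point of the cell. -/
def phase (n : Cell d q) (t : Fin d) : ℂ := rho d q t (n t : ℕ)

variable [∀ t, NeZero (q t)]

theorem rho_eq_stdAddChar (t : Fin d) (m : ℤ) :
    rho d q t m = ZMod.stdAddChar (m : ZMod (q t)) :=
  (ZMod.stdAddChar_coe m).symm

theorem phase_eq_stdAddChar (n : Cell d q) (t : Fin d) :
    phase n t = ZMod.stdAddChar ((n t : ℕ) : ZMod (q t)) := by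
  rw [phase, rho_eq_stdAddChar, Int.cast_natCast]

theorem norm_phase (n : Cell d q) (t : Fin d) : ‖phase n t‖ = 1 := by
  rw [phase_eq_stdAddChar, AddChar.norm_apply]

theorem phase_ne_zero (n : Cell d q) (t : Fin d) : phase n t ≠ 0 :=
  norm_ne_zero_iff.1 (by simp [norm_phase])

theorem phase_pow_period (n : Cell d q) (t : Fin d) : phase n t ^ q t = 1 := by
  rw [phase_eq_stdAddChar, ← AddChar.map_nsmul_eq_pow]
  simp

theorem bijective_natCast_zmod (N : ℕ) [NeZero N] :
    Function.Bijective fun m : Fin N => ((m : ℕ) : ZMod N) := by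
  refine (Fintype.bijective_iff_injective_and_card _).2 ⟨fun m m' h => ?_, by simp [ZMod.card]⟩
  have := (ZMod.natCast_eq_natCast_iff' _ _ _).1 h
  rwa [Nat.mod_eq_of_lt m.2, Nat.mod_eq_of_lt m'.2, ← Fin.ext_iff] at this

theorem phase_apply_inj {n m : Cell d q} {t : Fin d} : phase n t = phase m t ↔ n t = m t := by
  refine ⟨fun h => ?_, fun h => by rw [phase, phase, h]⟩
  rw [phase_eq_stdAddChar, phase_eq_stdAddChar] at h
  exact (bijective_natCast_zmod (q t)).1 (ZMod.injective_stdAddChar h)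

theorem phase_injective : Function.Injective (phase : Cell d q → Fin d → ℂ) := fun _ _ h =>
  funext fun t => phase_apply_inj.1 (congrFun h t)

theorem phase_zero : phase (0 : Cell d q) = 1 := by
  funext t
  simp [phase, rho]

/-- The ratio of the two phases is a root of unity of two coprime orders. -/
theorem eq_one_of_phase_eq_mul {n m : Cell d q} {c : ℂ} {i j : Fin d} (hco : (q i).Coprime (q j))
    (hi : phase n i = c * phase m i) (hj : phase n j = c * phase m j) : c = 1 := by
  have hpow : ∀ {t}, phase n t = c * phase m t → c ^ q t = 1 := fun {t} h => by
    simpa [mul_pow, phase_pow_period] using (congrArg (· ^ q t) h).symm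
  have hdvd := Nat.dvd_gcd (orderOf_dvd_of_pow_eq_one (hpow hi))
    (orderOf_dvd_of_pow_eq_one (hpow hj))
  rw [hco.gcd_eq_one, Nat.dvd_one] at hdvd
  exact orderOf_eq_one_iff.1 hdvd

end RootsOfUnity

section FloquetMatrix

variable {d : ℕ} {q : Fin d → ℕ}

/-- The diagonal part of the Floquet matrix: the symbol of the discrete Laplacian at the
quasimomentum `z`, evaluated at the points of the dual cell. -/
def symbol (z : Fin d → ℂ) (n : Cell d q) : ℂ :=
  ∑ t, (phase n t * z t + (phase n t * z t)⁻¹)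

/-- The quasimomentum-independent part `B_V` of the Floquet matrix. -/
def potentialMatrix (q : Fin d → ℕ) (V : (Fin d → ℤ) → ℝ) : Matrix (Cell d q) (Cell d q) ℂ :=
  Matrix.of fun n m => dft d q V fun t => ((n t : ℕ) : ℤ) - ((m t : ℕ) : ℤ)

theorem floquetMatrix_eq (V : (Fin d → ℤ) → ℝ) (z : Fin d → ℂ) :
    floquetMatrix d q V z = Matrix.diagonal (symbol z) + potentialMatrix q V := by
  ext n m
  simp only [floquetMatrix, Matrix.add_apply, Matrix.diagonal_apply, symbol, phase,
    potentialMatrix, Matrix.of_apply]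

theorem floquetDet_eq (V : (Fin d → ℤ) → ℝ) (z : Fin d → ℂ) (lam : ℂ) :
    floquetDet d q V z lam =
      (Matrix.diagonal (fun n => symbol z n - lam) + potentialMatrix q V).det := by
  rw [floquetDet, floquetMatrix_eq, add_sub_right_comm, Matrix.smul_one_eq_diagonal,
    Matrix.diagonal_sub]

theorem exists_laurentPolynomial_floquetDet (q : Fin d → ℕ) [∀ t, NeZero (q t)]
    (V : (Fin d → ℤ) → ℝ) (lam : ℂ) :
    ∃ p : MvPolynomial (Fin d) ℂ, ∀ z : Fin d → ℂ, (∀ t, z t ≠ 0) →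
      MvPolynomial.eval z p =
        (∏ t, z t) ^ Fintype.card (Cell d q) * floquetDet d q V z lam := by
  let entry : Cell d q → MvPolynomial (Fin d) ℂ := fun n =>
    ∑ t, (MvPolynomial.C (phase n t) * MvPolynomial.X t * ∏ i, MvPolynomial.X i +
      MvPolynomial.C (phase n t)⁻¹ * ∏ i ∈ Finset.univ.erase t, MvPolynomial.X i) -
      MvPolynomial.C lam * ∏ i, MvPolynomial.X i
  have hentry : ∀ z : Fin d → ℂ, (∀ t, z t ≠ 0) → ∀ n,
      MvPolynomial.eval z (entry n) = (∏ t, z t) * (symbol z n - lam) := by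
    intro z hz n
    simp only [entry, map_sub, map_sum, map_add, map_mul, map_prod, MvPolynomial.eval_C,
      MvPolynomial.eval_X, symbol, mul_sub, Finset.mul_sum, mul_comm lam]
    congr 1
    refine Finset.sum_congr rfl fun t _ => ?_
    rw [← Finset.mul_prod_erase Finset.univ z (Finset.mem_univ t)]
    have := hz t
    have := phase_ne_zero n t
    field_simp
  refine ⟨(Matrix.diagonal entry + (∏ t, MvPolynomial.X t : MvPolynomial (Fin d) ℂ) •
    (potentialMatrix q V).map MvPolynomial.C).det, fun z hz => ?_⟩
  rw [RingHom.map_det, floquetDet_eq, ← Matrix.det_smul]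
  congr 1
  ext n m
  by_cases h : n = m
  · simp [h, hentry z hz, mul_add]
  · simp [h]

theorem floquetDet_eq_of_generic_rays [∀ t, NeZero (q t)] {I : Type*} [Finite I]
    {u : I → Fin d → ℂ} (hu : ∀ i, u i ≠ 0) {V Y : (Fin d → ℤ) → ℝ} {lam : ℂ}
    (h : ∀ a : Fin d → ℂ, (∀ t, a t ≠ 0) → (∀ i, u i ⬝ᵥ a ≠ 0) → ∀ᶠ s : ℝ in atTop,
      floquetDet d q V ((s : ℂ) • a) lam = floquetDet d q Y ((s : ℂ) • a) lam)
    {z : Fin d → ℂ} (hz : ∀ t, z t ≠ 0) :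
    floquetDet d q V z lam = floquetDet d q Y z lam := by
  obtain ⟨p, hp⟩ := exists_laurentPolynomial_floquetDet q V lam
  obtain ⟨p', hp'⟩ := exists_laurentPolynomial_floquetDet q Y lam
  have hpp : p - p' = 0 := by
    refine mvPolynomial_eq_zero_of_generic_rays
      (u := Sum.elim (fun t => Pi.single t 1) u) ?_ fun a ha => ?_
    · rintro (t | i)
      exacts [by simp, hu i]
    · have hat : ∀ t, a t ≠ 0 := fun t => by simpa using ha (.inl t)
      filter_upwards [h a hat fun i => ha (.inr i), eventually_ne_atTop 0] with s hs hs0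
      have hsa : ∀ t, ((s : ℂ) • a) t ≠ 0 := fun t =>
        mul_ne_zero (by exact_mod_cast hs0) (hat t)
      rw [map_sub, hp _ hsa, hp' _ hsa, hs, sub_self]
  have hprod := hp z hz
  rw [sub_eq_zero.1 hpp, hp' z hz] at hprod
  exact (mul_left_cancel₀ (pow_ne_zero _ (Finset.prod_ne_zero_iff.2 fun t _ => hz t)) hprod).symm

end FloquetMatrix

section Rays

variable {d : ℕ} {q : Fin d → ℕ}

/-- The limit of `symbol (s a + b) n - s (phase n ⬝ᵥ a)` as `s → ∞`. -/
def raySymbol (a b : Fin d → ℂ) (n : Cell d q) : ℂ :=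
  phase n ⬝ᵥ b + ∑ t, if a t = 0 then (phase n t * b t)⁻¹ else 0

theorem tendsto_inv_affine (ρ a b : ℂ) (hρ : ρ ≠ 0) :
    Tendsto (fun s : ℝ => (ρ * (s * a + b))⁻¹) atTop (𝓝 (if a = 0 then (ρ * b)⁻¹ else 0)) := by
  split_ifs with ha
  · simp [ha]
  · have h := tendsto_inv_ofReal_atTop.mul (((tendsto_inv_ofReal_atTop.mul_const b).const_add a
      |>.const_mul ρ).inv₀ (by simp [hρ, ha]))
    rw [zero_mul] at h
    refine h.congr' ?_
    filter_upwards [eventually_ne_atTop 0] with s hs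
    have hs' : (s : ℂ) ≠ 0 := by exact_mod_cast hs
    rw [← mul_inv]
    congr 1
    field_simp

variable [∀ t, NeZero (q t)]

theorem tendsto_symbol_sub_ray (a b : Fin d → ℂ) (n : Cell d q) :
    Tendsto (fun s : ℝ => symbol ((s : ℂ) • a + b) n - s * (phase n ⬝ᵥ a)) atTop
      (𝓝 (raySymbol a b n)) := by
  have hsymbol : ∀ s : ℝ, symbol ((s : ℂ) • a + b) n - s * (phase n ⬝ᵥ a) =
      phase n ⬝ᵥ b + ∑ t, (phase n t * (s * a t + b t))⁻¹ := fun s => by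
    simp only [symbol, dotProduct, Pi.add_apply, Pi.smul_apply, smul_eq_mul, mul_add,
      Finset.sum_add_distrib, Finset.mul_sum, mul_left_comm]
    ring
  simp only [hsymbol]
  exact (tendsto_finsetSum _ fun t _ => tendsto_inv_affine _ _ _ (phase_ne_zero n t)).const_add _

theorem tendsto_inv_mul_symbol_ray (a b : Fin d → ℂ) (n : Cell d q) :
    Tendsto (fun s : ℝ => (s : ℂ)⁻¹ * symbol ((s : ℂ) • a + b) n) atTop
      (𝓝 (phase n ⬝ᵥ a)) := by
  have h := (tendsto_inv_ofReal_atTop.mul (tendsto_symbol_sub_ray a b n)).add_const (phase n ⬝ᵥ a)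
  rw [zero_mul, zero_add] at h
  refine h.congr' ?_
  filter_upwards [eventually_ne_atTop 0] with s hs
  have hs' : (s : ℂ) ≠ 0 := by exact_mod_cast hs
  field_simp
  ring

end Rays

section FermiToFixedEnergy

variable {d : ℕ} {q : Fin d → ℕ}

-- Since `0⁻¹ = 0`, setting a quasimomentum to `0` deletes its terms from the symbol.
theorem symbol_update (z : Fin d → ℂ) (i : Fin d) (w : ℂ) (n : Cell d q) :
    symbol (Function.update z i w) n =
      phase n i * w + (phase n i * w)⁻¹ + symbol (Function.update z i 0) n := by
  simp only [symbol, ← Finset.add_sum_erase Finset.univ _ (Finset.mem_univ i),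
    Function.update_self, mul_zero, inv_zero, add_zero, zero_add]
  congr 1
  refine Finset.sum_congr rfl fun t ht => ?_
  rw [Function.update_of_ne (Finset.ne_of_mem_erase ht),
    Function.update_of_ne (Finset.ne_of_mem_erase ht)]

theorem floquetDet_update (V : (Fin d → ℤ) → ℝ) (z : Fin d → ℂ) (i : Fin d) (w lam : ℂ) :
    floquetDet d q V (Function.update z i w) lam =
      laurentDet (phase · i) (Matrix.diagonal (fun n => symbol (Function.update z i 0) n - lam) +
        potentialMatrix q V) w := by
  rw [floquetDet_eq, laurentDet, ← add_assoc, Matrix.diagonal_add]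
  simp only [symbol_update z i w, add_sub_assoc]

variable [∀ t, NeZero (q t)]

theorem tendsto_inv_smul_floquetMatrix_ray (V : (Fin d → ℤ) → ℝ) (a : Fin d → ℂ) (lam : ℂ) :
    Tendsto (fun s : ℝ => (s : ℂ)⁻¹ • (Matrix.diagonal (fun n => symbol ((s : ℂ) • a) n - lam) +
      potentialMatrix q V)) atTop (𝓝 (Matrix.diagonal (phase · ⬝ᵥ a))) := by
  have hdiag : Tendsto (fun s : ℝ => (s : ℂ)⁻¹ • fun n : Cell d q => symbol ((s : ℂ) • a) n - lam)
      atTop (𝓝 (phase · ⬝ᵥ a)) := by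
    refine tendsto_pi_nhds.2 fun n => ?_
    simpa [mul_sub] using (tendsto_inv_mul_symbol_ray a 0 n).sub
      (tendsto_inv_ofReal_atTop.mul_const lam)
  have h := ((Continuous.matrix_diagonal continuous_id).tendsto _).comp hdiag |>.add
    (tendsto_inv_ofReal_atTop.smul_const (potentialMatrix q V))
  simpa [Function.comp_def, Matrix.diagonal_smul, smul_add] using h

theorem eventually_floquetDet_ray_eq_of_zeros_subset {V Y : (Fin d → ℤ) → ℝ} {lam : ℂ}
    (hF : ∀ z, (∀ t, z t ≠ 0) → floquetDet d q V z lam = 0 → floquetDet d q Y z lam = 0)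
    {a : Fin d → ℂ} (ha : ∀ t, a t ≠ 0) {i : Fin d} {l : Cell d q → ℂ}
    (hl : ∀ n, l n = phase n ⬝ᵥ Function.update a i 0) (hne : ∀ n, l n ≠ 0)
    (hdiv : Function.Injective (l / (phase · i))) (hmul : Function.Injective (l * (phase · i))) :
    ∀ᶠ s : ℝ in atTop,
      floquetDet d q V ((s : ℂ) • a) lam = floquetDet d q Y ((s : ℂ) • a) lam := by
  have hupdate : ∀ s : ℂ, Function.update (s • a) i 0 = s • Function.update a i 0 := fun s => by
    rw [← Function.update_smul, smul_zero]
  have hB := tendsto_inv_smul_floquetMatrix_ray V (q := q) (Function.update a i 0) lam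
  simp only [← hl, ← hupdate] at hB
  have heq := eventually_laurentDet_eq_of_zeros_subset (fun n => phase_ne_zero n i) hne hdiv hmul
    hB (B' := fun s : ℝ => Matrix.diagonal (fun n => symbol (Function.update ((s : ℂ) • a) i 0) n -
      lam) + potentialMatrix q Y) <| by
    filter_upwards [eventually_ne_atTop 0] with s hs w hw hzero
    rw [← floquetDet_update] at hzero ⊢
    refine hF _ (fun t => ?_) hzero
    rcases eq_or_ne t i with rfl | ht
    · rwa [Function.update_self]
    · rw [Function.update_of_ne ht]
      exact mul_ne_zero (by exact_mod_cast hs) (ha t)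
  filter_upwards [heq, eventually_ne_atTop 0] with s hs hs0
  have h := hs (((s : ℂ) • a) i) (mul_ne_zero (by exact_mod_cast hs0) (ha i))
  rwa [← floquetDet_update, ← floquetDet_update, Function.update_eq_self] at h

theorem exists_ne_and_ne (hd : 3 ≤ d) (i j : Fin d) : ∃ k, k ≠ i ∧ k ≠ j := by
  obtain ⟨k, hk⟩ : ∃ k, k ∉ ({i, j} : Finset (Fin d)) := by
    by_contra! h
    have := Finset.card_le_two (a := i) (b := j)
    rw [Finset.eq_univ_of_forall h, Finset.card_univ, Fintype.card_fin] at this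
    omega
  exact ⟨k, by simpa using hk⟩

theorem eq_of_smul_update_phase_eq (hd : 3 ≤ d) (hco : Pairwise (Function.onFun Nat.Coprime q))
    {i : Fin d} {n m : Cell d q} {x y : ℂ} (hx : x ≠ 0) (hi : x = y → phase n i = phase m i)
    (h : x • Function.update (phase n) i 0 = y • Function.update (phase m) i 0) : n = m := by
  have hratio : ∀ t, t ≠ i → phase n t = y / x * phase m t := fun t ht => by
    have ht' := congrFun h t
    simp only [Pi.smul_apply, Function.update_of_ne ht, smul_eq_mul] at ht'
    rw [div_mul_eq_mul_div, eq_div_iff hx, mul_comm, ht']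
  obtain ⟨j, hj, -⟩ := exists_ne_and_ne hd i i
  obtain ⟨k, hk, hkj⟩ := exists_ne_and_ne hd i j
  have hone := eq_one_of_phase_eq_mul (hco hkj) (hratio k hk) (hratio j hj)
  refine phase_injective (funext fun t => ?_)
  rcases eq_or_ne t i with rfl | ht
  · exact hi ((div_eq_one_iff_eq hx).1 hone).symm
  · rw [hratio t ht, hone, one_mul]

theorem floquetDet_eq_of_zeros_subset (hd : 3 ≤ d)
    (hco : Pairwise (Function.onFun Nat.Coprime q)) {V Y : (Fin d → ℤ) → ℝ} {lam : ℂ}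
    (hF : ∀ z, (∀ t, z t ≠ 0) → floquetDet d q V z lam = 0 → floquetDet d q Y z lam = 0)
    {z : Fin d → ℂ} (hz : ∀ t, z t ≠ 0) :
    floquetDet d q V z lam = floquetDet d q Y z lam := by
  let i : Fin d := ⟨0, by omega⟩
  let p : Cell d q → Fin d → ℂ := fun n => Function.update (phase n) i 0
  have hp : ∀ n a, p n ⬝ᵥ a = phase n ⬝ᵥ Function.update a i 0 := fun n a => by
    refine Finset.sum_congr rfl fun t _ => ?_
    rcases eq_or_ne t i with rfl | ht
    · simp [p]
    · simp [p, ht]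
  let Pairs := {x : Cell d q × Cell d q // x.1 ≠ x.2}
  refine floquetDet_eq_of_generic_rays (u := Sum.elim p (Sum.elim
    (fun x : Pairs => phase x.1.2 i • p x.1.1 - phase x.1.1 i • p x.1.2)
    (fun x : Pairs => phase x.1.1 i • p x.1.1 - phase x.1.2 i • p x.1.2))) ?_ (fun a ha hu => ?_) hz
  · rintro (n | ⟨⟨n, m⟩, hnm⟩ | ⟨⟨n, m⟩, hnm⟩) h
    · obtain ⟨j, hj, -⟩ := exists_ne_and_ne hd i i
      exact phase_ne_zero n j (by simpa [p, hj] using congrFun h j)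
    · exact hnm (eq_of_smul_update_phase_eq hd hco (phase_ne_zero m i) Eq.symm (sub_eq_zero.1 h))
    · exact hnm (eq_of_smul_update_phase_eq hd hco (phase_ne_zero n i) id (sub_eq_zero.1 h))
  · refine eventually_floquetDet_ray_eq_of_zeros_subset hF ha (fun n => hp n a)
      (fun n => hu (.inl n)) (fun n m h => ?_) (fun n m h => ?_)
    · by_contra hnm
      refine hu (.inr (.inl ⟨(n, m), hnm⟩)) ?_
      have := (div_eq_div_iff (phase_ne_zero n i) (phase_ne_zero m i)).1 h
      simp only [Sum.elim_inr, Sum.elim_inl, sub_dotProduct, smul_dotProduct, smul_eq_mul]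
      linear_combination this
    · by_contra hnm
      refine hu (.inr (.inr ⟨(n, m), hnm⟩)) ?_
      simp only [Sum.elim_inr, sub_dotProduct, smul_dotProduct, smul_eq_mul]
      simp only [Pi.mul_apply] at h
      linear_combination h

end FermiToFixedEnergy

section AvoidingHyperplanes

theorem exists_dotProduct_eq_zero_and_forall_ne_zero {ι I J K : Type*} [Fintype ι] [Finite I]
    [Finite J] [Field K] [Infinite K] {u : J → ι → K} {v : I → ι → K}
    (hv : ∀ i, v i ∉ Submodule.span K (Set.range u)) :
    ∃ a : ι → K, (∀ j, u j ⬝ᵥ a = 0) ∧ ∀ i, v i ⬝ᵥ a ≠ 0 := by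
  classical
  let f := dotProductEquiv K ι
  obtain ⟨a, ha, hne⟩ := Module.Dual.exists_forall_mem_ne_zero_of_forall_exists
    (⨅ j, (f (u j)).ker) (fun i => f (v i)) fun i => by
    by_contra! h
    have hmem : f (v i) ∈ Submodule.span K (Set.range (f ∘ u)) := mem_span_of_iInf_ker_le_ker h
    rw [Set.range_comp, ← LinearEquiv.coe_coe, ← Submodule.map_span] at hmem
    exact hv i (by simpa using (Submodule.mem_map_equiv _).1 hmem)
  exact ⟨a, fun j => by simpa [f] using (Submodule.mem_iInf _).1 ha j, hne⟩

end AvoidingHyperplanes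

section BlockLimit

variable {W : Type*} [Fintype W] [DecidableEq W]

theorem tendsto_det_diagonal_add {g : ℝ → W → ℂ} {g₀ l : W → ℂ} {T : W → Prop} [DecidablePred T]
    (hT : ∀ n, T n → Tendsto (g · n) atTop (𝓝 (g₀ n)))
    (hl : ∀ n, ¬ T n → Tendsto (fun s : ℝ => (s : ℂ)⁻¹ * g s n) atTop (𝓝 (l n)))
    (B : Matrix W W ℂ) :
    Tendsto (fun s : ℝ => (∏ n, if T n then 1 else (s : ℂ)⁻¹) * (Matrix.diagonal (g s) + B).det)
      atTop (𝓝 (((Matrix.diagonal g₀ + B).toSquareBlockProp T).det *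
        ∏ n : {n // ¬ T n}, l n)) := by
  let K : Matrix W W ℂ := Matrix.of fun n m =>
    if T n then (Matrix.diagonal g₀ + B) n m else Matrix.diagonal l n m
  have hdet : K.det = ((Matrix.diagonal g₀ + B).toSquareBlockProp T).det *
      ∏ n : {n // ¬ T n}, l n := by
    rw [Matrix.twoBlockTriangular_det K T, ← Matrix.det_diagonal]
    · congr 2
      · ext i j
        simp [K, Matrix.toSquareBlockProp_def, i.2]
      · ext i j
        simp [K, Matrix.toSquareBlockProp_def, i.2, Matrix.diagonal_apply, Subtype.ext_iff]
    · intro i hi j hj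
      simp [K, hi, show i ≠ j from fun h => hi (h ▸ hj)]
  rw [← hdet]
  simp only [← Matrix.det_mul_column]
  refine ((Continuous.matrix_det continuous_id).tendsto K).comp
    (tendsto_pi_nhds.2 fun n => tendsto_pi_nhds.2 fun m => ?_)
  by_cases hn : T n
  · rcases eq_or_ne n m with rfl | hnm
    · simpa [K, hn] using (hT n hn).add_const _
    · simp [K, hn, hnm]
  · rcases eq_or_ne n m with rfl | hnm
    · simpa [K, hn, mul_add] using (hl n hn).add (tendsto_inv_ofReal_atTop.mul_const (B n n))
    · simpa [K, hn, hnm] using tendsto_inv_ofReal_atTop.mul_const (B n m)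

theorem det_toSquareBlockProp_eq_of_eventually {g : ℝ → W → ℂ} {g₀ l : W → ℂ} {T : W → Prop}
    [DecidablePred T] (hT : ∀ n, T n → Tendsto (g · n) atTop (𝓝 (g₀ n)))
    (hl : ∀ n, ¬ T n → Tendsto (fun s : ℝ => (s : ℂ)⁻¹ * g s n) atTop (𝓝 (l n)))
    (hne : ∀ n, ¬ T n → l n ≠ 0) {B B' : Matrix W W ℂ}
    (h : ∀ᶠ s in atTop, (Matrix.diagonal (g s) + B).det = (Matrix.diagonal (g s) + B').det) :
    ((Matrix.diagonal g₀ + B).toSquareBlockProp T).det =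
      ((Matrix.diagonal g₀ + B').toSquareBlockProp T).det := by
  refine mul_right_cancel₀ (Finset.prod_ne_zero_iff.2 fun n _ => hne n.1 n.2)
    (tendsto_nhds_unique ((tendsto_det_diagonal_add hT hl B).congr' ?_)
      (tendsto_det_diagonal_add hT hl B'))
  filter_upwards [h] with s hs
  rw [hs]

end BlockLimit

section RayLimit

variable {d : ℕ} {q : Fin d → ℕ} [∀ t, NeZero (q t)]

/-- The limit of the rows of `M_V(s a + b) - λ` indexed by those `n` with `phase n ⬝ᵥ a = 0`. -/
def rayMatrix (V : (Fin d → ℤ) → ℝ) (lam : ℂ) (a b : Fin d → ℂ) :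
    Matrix (Cell d q) (Cell d q) ℂ :=
  Matrix.diagonal (fun n => raySymbol a b n - lam) + potentialMatrix q V

theorem eventually_affine_ne_zero {a b : ℂ} (h : a ≠ 0 ∨ b ≠ 0) :
    ∀ᶠ s : ℝ in atTop, (s : ℂ) * a + b ≠ 0 := by
  rcases eq_or_ne a 0 with rfl | ha
  · exact .of_forall fun s => by simpa using h
  · filter_upwards [eventually_ne_atTop (-(b / a)).re] with s hs hzero
    refine hs ?_
    rw [← show (s : ℂ) = -(b / a) by field_simp; linear_combination hzero, ofReal_re]

theorem det_rayMatrix_submatrix_eq {V Y : (Fin d → ℤ) → ℝ} {lam : ℂ}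
    (h : ∀ z, (∀ t, z t ≠ 0) → floquetDet d q V z lam = floquetDet d q Y z lam)
    {a b : Fin d → ℂ} (hab : ∀ t, a t ≠ 0 ∨ b t ≠ 0) {N : Type*} [Fintype N] [DecidableEq N]
    {φ : N → Cell d q} (hφ : Function.Injective φ)
    (hker : ∀ n : Cell d q, phase n ⬝ᵥ a = 0 ↔ n ∈ Set.range φ) :
    ((rayMatrix V lam a b).submatrix φ φ).det = ((rayMatrix Y lam a b).submatrix φ φ).det := by
  classical
  let ψ : N ≃ {n : Cell d q // phase n ⬝ᵥ a = 0} :=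
    (Equiv.ofInjective φ hφ).trans (Equiv.subtypeEquivRight fun n => (hker n).symm)
  have hsub : ∀ M : Matrix (Cell d q) (Cell d q) ℂ,
      (M.toSquareBlockProp (phase · ⬝ᵥ a = 0)).det = (M.submatrix φ φ).det := fun M =>
    (Matrix.det_submatrix_equiv_self ψ (M.toSquareBlockProp _)).symm
  rw [← hsub, ← hsub]
  refine det_toSquareBlockProp_eq_of_eventually
    (g := fun (s : ℝ) (n : Cell d q) => symbol ((s : ℂ) • a + b) n - lam)
    (l := (phase · ⬝ᵥ a)) (fun n hn => ?_) (fun n _ => ?_) (fun n hn => hn) ?_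
  · simpa [hn] using (tendsto_symbol_sub_ray a b n).sub_const lam
  · simpa [mul_sub] using (tendsto_inv_mul_symbol_ray a b n).sub
      (tendsto_inv_ofReal_atTop.mul_const lam)
  · filter_upwards [eventually_all.2 fun t => eventually_affine_ne_zero (hab t)] with s hs
    rw [← floquetDet_eq, ← floquetDet_eq]
    exact h _ hs

end RayLimit

section Characters

variable {d : ℕ} {q : Fin d → ℕ}

/-- The point of `ℤ^d` represented by an element of the periodicity cell. -/
def latticePoint (n : Cell d q) (t : Fin d) : ℤ := (n t : ℕ)

theorem dft_zero (V : (Fin d → ℤ) → ℝ) : dft d q V 0 = potentialAvg d q V := by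
  simp [dft, potentialAvg]

theorem IsPeriodicPotential.apply_congr {V : (Fin d → ℤ) → ℝ} (hV : IsPeriodicPotential d q V)
    {x y : Fin d → ℤ} (h : ∀ t, (x t : ZMod (q t)) = y t) : V x = V y := by
  rw [← hV y (x - y) fun t => (ZMod.intCast_eq_intCast_iff_dvd_sub _ _ _).1 (h t).symm,
    add_sub_cancel]

variable [∀ t, NeZero (q t)]

/-- The character `x ↦ exp (2πi ∑ l_t x_t / q_t)` of `ℤ^d`, as a product of the standard characters
of `ℤ / q_t`. -/
def character (q : Fin d → ℕ) [∀ t, NeZero (q t)] (l x : Fin d → ℤ) : ℂ :=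
  ∏ t, ZMod.stdAddChar ((l t * x t : ℤ) : ZMod (q t))

theorem character_comm (l x : Fin d → ℤ) : character q l x = character q x l := by
  simp only [character, mul_comm]

theorem character_zero (x : Fin d → ℤ) : character q 0 x = 1 := by
  simp [character]

theorem character_add (l x y : Fin d → ℤ) :
    character q l (x + y) = character q l x * character q l y := by
  simp only [character, Pi.add_apply, mul_add, Int.cast_add, AddChar.map_add_eq_mul,
    Finset.prod_mul_distrib]

theorem character_neg (l x : Fin d → ℤ) : character q (-l) x = character q l (-x) := by
  simp only [character, Pi.neg_apply, neg_mul, mul_neg]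

theorem character_neg_eq_conj (l x : Fin d → ℤ) :
    character q (-l) x = (starRingEnd ℂ) (character q l x) := by
  simp only [character, Pi.neg_apply, neg_mul, Int.cast_neg, AddChar.map_neg_eq_conj, map_prod]

theorem character_congr {l l' : Fin d → ℤ} (h : ∀ t, (l t : ZMod (q t)) = l' t)
    (x : Fin d → ℤ) : character q l x = character q l' x := by
  simp only [character, Int.cast_mul, h]

theorem expect_pi_prod {ι : Type*} [Fintype ι] [DecidableEq ι] {κ : ι → Type*}
    [∀ i, Fintype (κ i)] (f : (i : ι) → κ i → ℂ) :
    𝔼 x : (i : ι) → κ i, ∏ i, f i (x i) = ∏ i, 𝔼 m, f i m := by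
  simp only [Fintype.expect_eq_sum_div_card, Finset.prod_div_distrib, Finset.prod_univ_sum,
    Fintype.piFinset_univ, Fintype.card_pi, Nat.cast_prod]

theorem expect_character (l : Fin d → ℤ) :
    𝔼 n : Cell d q, character q l (latticePoint n) =
      if ∀ t, (l t : ZMod (q t)) = 0 then 1 else 0 := by
  have hone : ∀ t, 𝔼 m : Fin (q t), ZMod.stdAddChar ((l t * (m : ℕ) : ℤ) : ZMod (q t)) =
      if (l t : ZMod (q t)) = 0 then (1 : ℂ) else 0 := by
    intro t
    rw [Fintype.expect_bijective _ (bijective_natCast_zmod (q t)) _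
      (fun x => ZMod.stdAddChar (x * (l t : ZMod (q t)))) fun m => by push_cast; ring_nf,
      Fintype.expect_eq_sum_div_card, AddChar.sum_mulShift _ (ZMod.isPrimitive_stdAddChar _)]
    split_ifs <;> simp [NeZero.ne]
  simp only [character, latticePoint]
  rw [expect_pi_prod fun t (m : Fin (q t)) =>
    ZMod.stdAddChar ((l t * (m : ℕ) : ℤ) : ZMod (q t)), Finset.prod_congr rfl fun t _ => hone t,
    Finset.prod_ite_zero]
  simp

theorem dft_eq_expect (V : (Fin d → ℤ) → ℝ) (l : Fin d → ℤ) :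
    dft d q V l = 𝔼 n : Cell d q, (V (latticePoint n) : ℂ) * character q (-l) (latticePoint n) := by
  rw [dft, Fintype.expect_eq_sum_div_card, one_div_mul_eq_div]
  congr 1
  · refine Finset.sum_congr rfl fun n _ => ?_
    rw [Finset.mul_sum, Complex.exp_sum]
    refine congrArg _ (Finset.prod_congr rfl fun t _ => ?_)
    rw [← rho_eq_stdAddChar, rho]
    congr 1
    simp only [Pi.neg_apply, latticePoint]
    push_cast
    ring
  · simp

theorem dft_congr (V : (Fin d → ℤ) → ℝ) {l l' : Fin d → ℤ}
    (h : ∀ t, (l t : ZMod (q t)) = l' t) : dft d q V l = dft d q V l' := by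
  simp only [dft_eq_expect]
  refine Finset.expect_congr rfl fun n _ => ?_
  rw [character_congr (l' := -l') fun t => by simp [h]]

theorem dft_neg (V : (Fin d → ℤ) → ℝ) (l : Fin d → ℤ) :
    dft d q V (-l) = (starRingEnd ℂ) (dft d q V l) := by
  simp only [dft_eq_expect, Fintype.expect_eq_sum_div_card, map_div₀, map_sum, map_mul,
    Complex.conj_ofReal, character_neg_eq_conj, map_natCast]

theorem dft_add (V U : (Fin d → ℤ) → ℝ) (l : Fin d → ℤ) :
    dft d q (fun x => V x + U x) l = dft d q V l + dft d q U l := by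
  simp only [dft_eq_expect, Complex.ofReal_add, add_mul, Finset.expect_add_distrib]

theorem dft_sum {ι : Type*} [Fintype ι] (V : ι → (Fin d → ℤ) → ℝ) (l : Fin d → ℤ) :
    dft d q (fun x => ∑ i, V i x) l = ∑ i, dft d q (V i) l := by
  simp only [dft_eq_expect, Complex.ofReal_sum, Finset.sum_mul, Finset.expect_sum_comm]

theorem dft_const (c : ℝ) (l : Fin d → ℤ) :
    dft d q (fun _ => c) l = if ∀ t, (l t : ZMod (q t)) = 0 then (c : ℂ) else 0 := by
  rw [dft_eq_expect, ← Finset.mul_expect, expect_character]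
  simp

theorem exists_latticePoint_congr (q : Fin d → ℕ) [∀ t, NeZero (q t)] (x : Fin d → ℤ) :
    ∃ n : Cell d q, ∀ t, (latticePoint n t : ZMod (q t)) = x t := by
  choose n hn using fun t => (bijective_natCast_zmod (q t)).2 (x t : ZMod (q t))
  exact ⟨n, fun t => by simpa [latticePoint] using hn t⟩

theorem fourier_inversion (V : (Fin d → ℤ) → ℝ) (n : Cell d q) :
    ∑ m : Cell d q, dft d q V (latticePoint m) * character q (latticePoint m) (latticePoint n) =
      V (latticePoint n) := by
  have horth : ∀ k : Cell d q, ∑ m : Cell d q, character q (-latticePoint m) (latticePoint k) *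
      character q (latticePoint m) (latticePoint n) =
        if k = n then (Fintype.card (Cell d q) : ℂ) else 0 := by
    intro k
    have hiff : (∀ t, ((latticePoint n t - latticePoint k t : ℤ) : ZMod (q t)) = 0) ↔ k = n := by
      simp only [Int.cast_sub, sub_eq_zero, latticePoint, Int.cast_natCast]
      exact ⟨fun h => funext fun t => ((bijective_natCast_zmod (q t)).1 (h t)).symm,
        fun h t => by rw [h]⟩
    calc ∑ m : Cell d q, character q (-latticePoint m) (latticePoint k) *
          character q (latticePoint m) (latticePoint n)
        = ∑ m : Cell d q, character q (latticePoint n - latticePoint k) (latticePoint m) :=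
          Finset.sum_congr rfl fun m _ => by
            rw [character_comm _ (latticePoint m), sub_eq_neg_add, character_add, character_neg]
      _ = Fintype.card (Cell d q) * 𝔼 m : Cell d q,
            character q (latticePoint n - latticePoint k) (latticePoint m) :=
          (Fintype.card_mul_expect _).symm
      _ = if k = n then (Fintype.card (Cell d q) : ℂ) else 0 := by
          rw [expect_character, mul_ite, mul_one, mul_zero]
          exact if_congr hiff rfl rfl
  simp only [dft_eq_expect, Finset.expect_mul, mul_assoc]
  rw [← Finset.expect_sum_comm]
  simp only [← Finset.mul_sum, horth, mul_ite, mul_zero]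
  rw [Fintype.expect_eq_sum_div_card, Finset.sum_ite_eq' Finset.univ n, if_pos (Finset.mem_univ n),
    mul_div_cancel_right₀ _ (Nat.cast_ne_zero.2 Fintype.card_ne_zero)]

theorem eq_of_dft_eq {V U : (Fin d → ℤ) → ℝ} (hV : IsPeriodicPotential d q V)
    (hU : IsPeriodicPotential d q U) (h : ∀ l, dft d q V l = dft d q U l) : V = U := by
  funext x
  obtain ⟨n, hn⟩ := exists_latticePoint_congr q x
  have hcell : (V (latticePoint n) : ℂ) = U (latticePoint n) := by
    simp only [← fourier_inversion, h]
  rw [← hV.apply_congr hn, ← hU.apply_congr hn]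
  exact_mod_cast hcell

end Characters

section BlockAverage

instance neZero_comp {ι κ : Type*} (q : κ → ℕ) [∀ t, NeZero (q t)] (e : ι → κ) (i : ι) :
    NeZero ((q ∘ e) i) :=
  inferInstanceAs (NeZero (q (e i)))

variable {d k : ℕ} {q : Fin d → ℕ} {e : Fin k → Fin d}

/-- The average of `V` over the coordinates outside the block `e`, as a function of those in it. -/
def blockAverage (q : Fin d → ℕ) (e : Fin k → Fin d) (V : (Fin d → ℤ) → ℝ) (x : Fin k → ℤ) : ℝ :=
  𝔼 n : Cell d q, V (Function.extend e x (latticePoint n))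

theorem isPeriodicPotential_blockAverage_comp (he : Function.Injective e) {V : (Fin d → ℤ) → ℝ}
    (hV : IsPeriodicPotential d q V) :
    IsPeriodicPotential d q fun x => blockAverage q e V (x ∘ e) := by
  intro x γ hγ
  refine Finset.expect_congr rfl fun n _ => hV.apply_congr fun t => ?_
  by_cases ht : t ∈ Set.range e
  · obtain ⟨i, rfl⟩ := ht
    simp [he.extend_apply, (ZMod.intCast_zmod_eq_zero_iff_dvd _ _).2 (hγ (e i))]
  · simp [Function.extend_apply' _ _ _ ht]

variable [∀ t, NeZero (q t)]

/-- The point of the cell with coordinates `m` along the block of coordinates `e` and those of `n`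
elsewhere. -/
def overwrite (e : Fin k → Fin d) (m : Cell k (q ∘ e)) (n : Cell d q) : Cell d q := fun t =>
  Fin.ofNat (q t) (Function.extend e (fun i => (m i : ℕ)) (fun s => (n s : ℕ)) t)

theorem overwrite_apply (he : Function.Injective e) (m : Cell k (q ∘ e)) (n : Cell d q)
    (i : Fin k) : overwrite e m n (e i) = m i := by
  rw [overwrite, he.extend_apply]
  exact Fin.ofNat_val_eq_self (n := q (e i)) (m i)

theorem overwrite_apply_of_notMem (m : Cell k (q ∘ e)) (n : Cell d q) {t : Fin d}
    (ht : t ∉ Set.range e) : overwrite e m n t = n t := by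
  rw [overwrite, Function.extend_apply' _ _ _ ht, Fin.ofNat_val_eq_self]

theorem extend_latticePoint (he : Function.Injective e) (m : Cell k (q ∘ e)) (n : Cell d q) :
    Function.extend e (latticePoint m) (latticePoint n) = latticePoint (overwrite e m n) := by
  funext t
  by_cases ht : t ∈ Set.range e
  · obtain ⟨i, rfl⟩ := ht
    rw [he.extend_apply, latticePoint, latticePoint, overwrite_apply he]
  · rw [Function.extend_apply' _ _ _ ht, latticePoint, latticePoint,
      overwrite_apply_of_notMem _ _ ht]

/-- Exchanging the block coordinates of `n` with `m` is an involution of the pairs `(m, n)`. -/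
theorem expect_expect_overwrite (he : Function.Injective e) (F : Cell d q → ℂ) :
    𝔼 m : Cell k (q ∘ e), 𝔼 n : Cell d q, F (overwrite e m n) = 𝔼 n : Cell d q, F n := by
  let swap : Cell k (q ∘ e) × Cell d q → Cell k (q ∘ e) × Cell d q := fun p =>
    (fun i => p.2 (e i), overwrite e p.1 p.2)
  have hswap : Function.Involutive swap := fun p => by
    refine Prod.ext (funext fun i => overwrite_apply he _ _ i) (funext fun t => ?_)
    by_cases ht : t ∈ Set.range e
    · obtain ⟨i, rfl⟩ := ht
      exact overwrite_apply he _ _ i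
    · simp only [swap, overwrite_apply_of_notMem _ _ ht]
  rw [← Finset.expect_product', Finset.univ_product_univ,
    Fintype.expect_bijective swap hswap.bijective _ (fun p => F p.2) fun _ => rfl,
    ← Finset.univ_product_univ, Finset.expect_product]
  exact Fintype.expect_const (𝔼 n : Cell d q, F n)

theorem character_extend (he : Function.Injective e) (l : Fin d → ℤ) (x : Fin k → ℤ)
    (y : Fin d → ℤ) : character q l (Function.extend e x y) =
      character (q ∘ e) (l ∘ e) x * character q (Function.extend e 0 l) y := by
  rw [character, character, Fintype.prod_of_injective e he _
    (Function.extend e (fun i => ZMod.stdAddChar (((l ∘ e) i * x i : ℤ) : ZMod (q (e i)))) 1)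
    (fun t ht => Function.extend_apply' _ _ _ ht) fun i => (he.extend_apply _ _ i).symm,
    character, ← Finset.prod_mul_distrib]
  refine Finset.prod_congr rfl fun t _ => ?_
  by_cases ht : t ∈ Set.range e
  · obtain ⟨i, rfl⟩ := ht
    simp [he.extend_apply]
  · simp [Function.extend_apply' _ _ _ ht]

theorem dft_pullback (he : Function.Injective e) (U : (Fin k → ℤ) → ℝ) (l : Fin d → ℤ) :
    dft d q (fun x => U (x ∘ e)) l =
      if ∀ t ∉ Set.range e, (l t : ZMod (q t)) = 0 then dft k (q ∘ e) U (l ∘ e) else 0 := by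
  have hterm : ∀ (m : Cell k (q ∘ e)) (n : Cell d q),
      (U (latticePoint (overwrite e m n) ∘ e) : ℂ) *
        character q (-l) (latticePoint (overwrite e m n)) =
      U (latticePoint m) * character (q ∘ e) (-l ∘ e) (latticePoint m) *
        character q (Function.extend e 0 (-l)) (latticePoint n) := fun m n => by
    rw [← extend_latticePoint he, character_extend he, Function.extend_comp he, mul_assoc]
    rfl
  have hiff : (∀ t, ((Function.extend e 0 (-l) t : ℤ) : ZMod (q t)) = 0) ↔
      ∀ t ∉ Set.range e, (l t : ZMod (q t)) = 0 := by
    refine ⟨fun h t ht => ?_, fun h t => ?_⟩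
    · simpa [Function.extend_apply' _ _ _ ht] using h t
    · by_cases ht : t ∈ Set.range e
      · obtain ⟨i, rfl⟩ := ht
        simp [he.extend_apply]
      · simpa [Function.extend_apply' _ _ _ ht] using h t ht
  rw [dft_eq_expect, ← expect_expect_overwrite he]
  simp only [hterm, ← Finset.mul_expect, expect_character, hiff, mul_ite,
    mul_one, mul_zero, dft_eq_expect]
  split_ifs
  · rfl
  · exact Finset.expect_const_zero _

theorem dft_blockAverage (he : Function.Injective e) (V : (Fin d → ℤ) → ℝ) (l : Fin k → ℤ) :
    dft k (q ∘ e) (blockAverage q e V) l = dft d q V (Function.extend e l 0) := by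
  have hterm : ∀ (m : Cell k (q ∘ e)) (n : Cell d q),
      character (q ∘ e) (-l) (latticePoint m) =
        character q (-Function.extend e l 0) (latticePoint (overwrite e m n)) := fun m n => by
    have hcomp : (-Function.extend e l 0) ∘ e = -l := funext fun i => by simp [he.extend_apply]
    have hzero : Function.extend e 0 (-Function.extend e l 0) = 0 := funext fun t => by
      by_cases ht : t ∈ Set.range e
      · obtain ⟨i, rfl⟩ := ht
        simp [he.extend_apply]
      · simp [Function.extend_apply' _ _ _ ht]
    rw [← extend_latticePoint he, character_extend he, hcomp, hzero, character_zero, mul_one]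
  rw [dft_eq_expect, dft_eq_expect, ← expect_expect_overwrite he]
  simp only [blockAverage, Complex.ofReal_expect, Finset.expect_mul, extend_latticePoint he]
  refine Finset.expect_congr rfl fun m _ => Finset.expect_congr rfl fun n _ => ?_
  rw [hterm m n]

end BlockAverage

section SmallBlocks

variable {d k : ℕ} {q : Fin d → ℕ} {e : Fin k → Fin d}

theorem apply_eq_of_mem_span_single_one {v : Fin d → ℂ}
    (hv : v ∈ Submodule.span ℂ
      (Set.range (Sum.elim (fun i => Pi.single (e i) 1) fun _ : Unit => (1 : Fin d → ℂ))))
    {s t : Fin d} (hs : s ∉ Set.range e) (ht : t ∉ Set.range e) : v s = v t := by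
  induction hv using Submodule.span_induction with
  | mem x hx =>
    obtain ⟨i | u, rfl⟩ := hx
    · have hne : ∀ {r}, r ∉ Set.range e → r ≠ e i := fun hr h => hr ⟨i, h.symm⟩
      simp [hne hs, hne ht]
    · rfl
  | zero => rfl
  | add x y _ _ hx hy => rw [Pi.add_apply, Pi.add_apply, hx, hy]
  | smul c x _ hx => rw [Pi.smul_apply, Pi.smul_apply, hx]

variable [∀ t, NeZero (q t)]

theorem exists_direction_vanishing_on_block (hco : Pairwise (Function.onFun Nat.Coprime q))
    (he : (Set.range e)ᶜ.Nontrivial) :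
    ∃ a : Fin d → ℂ, (∀ t, a t = 0 ↔ t ∈ Set.range e) ∧ 1 ⬝ᵥ a = 0 ∧
      ∀ n : Cell d q, phase n ⬝ᵥ a = 0 → ∀ t ∉ Set.range e, n t = 0 := by
  let v : {t // t ∉ Set.range e} ⊕ {n : Cell d q // ∃ t ∉ Set.range e, n t ≠ 0} → Fin d → ℂ :=
    Sum.elim (fun t => Pi.single t.1 1) fun n => phase n.1
  have hv : ∀ i, v i ∉ Submodule.span ℂ
      (Set.range (Sum.elim (fun i => Pi.single (e i) 1) fun _ : Unit => (1 : Fin d → ℂ))) := by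
    rintro (⟨t, ht⟩ | ⟨n, t, ht, hnt⟩) hmem <;>
      obtain ⟨s, hs, hst⟩ := he.exists_ne t <;>
      have heq := apply_eq_of_mem_span_single_one hmem hs ht
    · simp [v, hst] at heq
    · have hone : phase n t = 1 := eq_one_of_phase_eq_mul (m := 0) (hco hst)
        (by simpa [v, phase_zero] using heq) (by simp [phase_zero])
      exact hnt (phase_apply_inj (m := 0).1 (by rw [hone, phase_zero, Pi.one_apply]))
  obtain ⟨a, ha, hne⟩ := exists_dotProduct_eq_zero_and_forall_ne_zero hv
  refine ⟨a, fun t => ⟨fun h0 => ?_, ?_⟩, ha (.inr ()), fun n hn t ht => ?_⟩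
  · by_contra ht
    exact hne (.inl ⟨t, ht⟩) (by simpa [v] using h0)
  · rintro ⟨i, rfl⟩
    simpa using ha (.inl i)
  · by_contra hnt
    exact hne (.inr ⟨n, t, ht, hnt⟩) hn

theorem dotProduct_extend (he : Function.Injective e) (v : Fin d → ℂ) (x : Fin k → ℂ)
    (y : Fin d → ℂ) :
    v ⬝ᵥ Function.extend e x y = (v ∘ e) ⬝ᵥ x + Function.extend e 0 v ⬝ᵥ y := by
  rw [dotProduct, dotProduct, Fintype.sum_of_injective e he _
    (Function.extend e (fun i => (v ∘ e) i * x i) 0)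
    (fun t ht => Function.extend_apply' _ _ _ ht) fun i => (he.extend_apply _ _ i).symm,
    dotProduct, ← Finset.sum_add_distrib]
  refine Finset.sum_congr rfl fun t _ => ?_
  by_cases ht : t ∈ Set.range e
  · obtain ⟨i, rfl⟩ := ht
    simp [he.extend_apply]
  · simp [Function.extend_apply' _ _ _ ht]

theorem phase_overwrite_comp (he : Function.Injective e) (m : Cell k (q ∘ e)) (n : Cell d q) :
    phase (overwrite e m n) ∘ e = phase m := by
  funext i
  simp only [Function.comp_apply, phase, overwrite_apply he]
  rfl

theorem raySymbol_overwrite (he : Function.Injective e) {a : Fin d → ℂ}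
    (ha : ∀ t, a t = 0 ↔ t ∈ Set.range e) {s : Fin d} (hs : s ∉ Set.range e) (z : Fin k → ℂ)
    (c : ℂ) (m : Cell k (q ∘ e)) :
    raySymbol a (Function.extend e z (Pi.single s c)) (overwrite e m 0) = symbol z m + c := by
  have hphase : phase (overwrite e m 0) s = 1 := by
    rw [phase_apply_inj.2 (overwrite_apply_of_notMem m 0 hs), phase_zero, Pi.one_apply]
  have hsum : ∑ t, (if a t = 0 then
        (phase (overwrite e m 0) t * Function.extend e z (Pi.single s c) t)⁻¹ else 0) =
      ∑ i, (phase m i * z i)⁻¹ := by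
    refine (Fintype.sum_of_injective e he _ _ (fun t ht => if_neg (mt (ha t).1 ht))
      fun i => ?_).symm
    rw [if_pos ((ha _).2 ⟨i, rfl⟩), he.extend_apply, ← phase_overwrite_comp he m 0,
      Function.comp_apply]
  rw [raySymbol, hsum, dotProduct_extend he, phase_overwrite_comp he, dotProduct_single,
    Function.extend_apply' _ _ _ hs, hphase, one_mul, symbol, Finset.sum_add_distrib, dotProduct]
  ring

theorem overwrite_zero_injective (he : Function.Injective e) :
    Function.Injective fun m : Cell k (q ∘ e) => overwrite e m 0 := fun m m' h => funext fun i => by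
  rw [← overwrite_apply he m 0, ← overwrite_apply he m' 0]
  exact congrFun h (e i)

theorem potentialMatrix_submatrix_overwrite (he : Function.Injective e) (V : (Fin d → ℤ) → ℝ) :
    (potentialMatrix q V).submatrix (overwrite e · 0) (overwrite e · 0) =
      potentialMatrix (q ∘ e) (blockAverage q e V) := by
  ext m m'
  simp only [Matrix.submatrix_apply, potentialMatrix, Matrix.of_apply, dft_blockAverage he]
  congr 1
  funext t
  by_cases ht : t ∈ Set.range e
  · obtain ⟨i, rfl⟩ := ht
    simp only [overwrite_apply he, he.extend_apply]
  · simp [overwrite_apply_of_notMem _ _ ht, Function.extend_apply' _ _ _ ht]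

theorem rayMatrix_submatrix_overwrite (he : Function.Injective e) (V : (Fin d → ℤ) → ℝ)
    {a : Fin d → ℂ} (ha : ∀ t, a t = 0 ↔ t ∈ Set.range e) {s : Fin d} (hs : s ∉ Set.range e)
    (z : Fin k → ℂ) (lam mu : ℂ) :
    (rayMatrix V lam a (Function.extend e z (Pi.single s (lam - mu)))).submatrix
        (overwrite e · 0) (overwrite e · 0) =
      floquetMatrix k (q ∘ e) (blockAverage q e V) z - mu • 1 := by
  rw [rayMatrix, Matrix.submatrix_add, Pi.add_apply, Pi.add_apply,
    potentialMatrix_submatrix_overwrite he,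
    Matrix.submatrix_diagonal _ _ (overwrite_zero_injective he), floquetMatrix_eq,
    Matrix.smul_one_eq_diagonal, add_sub_right_comm, Matrix.diagonal_sub]
  congr 2
  funext m
  rw [Function.comp_apply, raySymbol_overwrite he ha hs]
  ring

theorem floquetIsospectral_blockAverage_of_nontrivial_compl
    (hco : Pairwise (Function.onFun Nat.Coprime q)) {V Y : (Fin d → ℤ) → ℝ} {lam : ℂ}
    (h : ∀ z, (∀ t, z t ≠ 0) → floquetDet d q V z lam = floquetDet d q Y z lam)
    (he : Function.Injective e) (hcompl : (Set.range e)ᶜ.Nontrivial) :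
    FloquetIsospectral k (q ∘ e) (blockAverage q e V) (blockAverage q e Y) := by
  intro z hz mu
  obtain ⟨a, ha, hone, hker⟩ := exists_direction_vanishing_on_block hco hcompl
  obtain ⟨s, hs⟩ := hcompl.nonempty
  have hkerφ : ∀ n : Cell d q, phase n ⬝ᵥ a = 0 ↔
      n ∈ Set.range fun m : Cell k (q ∘ e) => overwrite e m 0 := by
    refine fun n => ⟨fun hn => ⟨fun i => n (e i), funext fun t => ?_⟩, ?_⟩
    · by_cases ht : t ∈ Set.range e
      · obtain ⟨i, rfl⟩ := ht
        exact overwrite_apply he _ _ _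
      · exact (overwrite_apply_of_notMem _ _ ht).trans (hker n hn t ht).symm
    · rintro ⟨m, rfl⟩
      rw [← hone]
      refine Finset.sum_congr rfl fun t _ => ?_
      by_cases ht : t ∈ Set.range e
      · rw [(ha t).2 ht, mul_zero, mul_zero]
      · rw [phase_apply_inj.2 (overwrite_apply_of_notMem m 0 ht), phase_zero]
  have hdet := det_rayMatrix_submatrix_eq h (b := Function.extend e z (Pi.single s (lam - mu)))
    (fun t => ?_) (overwrite_zero_injective he) hkerφ
  · rwa [rayMatrix_submatrix_overwrite he V ha hs, rayMatrix_submatrix_overwrite he Y ha hs]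
      at hdet
  · by_cases ht : t ∈ Set.range e
    · obtain ⟨i, rfl⟩ := ht
      exact .inr (by rw [he.extend_apply]; exact hz i)
    · exact .inl (mt (ha t).1 ht)

end SmallBlocks

section MixedCoefficients

theorem eq_zero_or_eq_zero_of_norm_add_mul_eq_one {α β x y z : ℂ} (hx : ‖x‖ = 1) (hy : ‖y‖ = 1)
    (hz : ‖z‖ = 1) (hxy : x ≠ y) (hxz : x ≠ z) (hyz : y ≠ z) (hαx : ‖α + β * x‖ = 1)
    (hαy : ‖α + β * y‖ = 1) (hαz : ‖α + β * z‖ = 1) : α = 0 ∨ β = 0 := by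
  have hconj : ∀ {w : ℂ}, ‖w‖ = 1 → starRingEnd ℂ w * w = 1 := fun {w} h => by
    rw [Complex.conj_mul', h, ofReal_one, one_pow]
  let κ := 1 - starRingEnd ℂ α * α - starRingEnd ℂ β * β
  have hquad : ∀ {w : ℂ}, ‖w‖ = 1 → ‖α + β * w‖ = 1 →
      starRingEnd ℂ α * β * w ^ 2 - κ * w + α * starRingEnd ℂ β = 0 := fun {w} hw h => by
    have hone := hconj h
    simp only [map_add, map_mul] at hone
    linear_combination w * hone - (starRingEnd ℂ β * β * w + α * starRingEnd ℂ β) * hconj hw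
  have hsecant : ∀ {w : ℂ}, ‖w‖ = 1 → ‖α + β * w‖ = 1 → x ≠ w →
      starRingEnd ℂ α * β * (x + w) = κ := fun {w} hw h hne =>
    mul_left_cancel₀ (sub_ne_zero.2 hne) (by linear_combination hquad hx hαx - hquad hw h)
  have hzero : starRingEnd ℂ α * β = 0 := mul_right_cancel₀ (sub_ne_zero.2 hyz)
    (by linear_combination hsecant hy hαy hxy - hsecant hz hαz hxz)
  simpa using hzero

variable {d : ℕ} {q : Fin d → ℕ} [∀ t, NeZero (q t)]

theorem phase_ne_phase {n : Cell d q} {i j : Fin d} (hco : (q i).Coprime (q j)) (hi : n i ≠ 0) :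
    phase n i ≠ phase n j := fun h => hi <| by
  have hone : phase n i = 1 := eq_one_of_phase_eq_mul (n := n) (m := 0) hco
    (by simp [phase_zero]) (by simp [phase_zero, h])
  exact phase_apply_inj (m := 0).1 (by rw [hone, phase_zero, Pi.one_apply])

theorem single_notMem_span_phase (hd : 3 ≤ d) (hco : Pairwise (Function.onFun Nat.Coprime q))
    {n : Cell d q} {i j : Fin d} (hij : i ≠ j) (hi : n i ≠ 0) (hj : n j ≠ 0) (t : Fin d) :
    Pi.single t 1 ∉ Submodule.span ℂ {phase n, 1} := by
  intro hmem
  obtain ⟨α, β, hαβ⟩ := Submodule.mem_span_pair.1 hmem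
  obtain ⟨r, hrt, hr⟩ : ∃ r, r ≠ t ∧ n r ≠ 0 := by
    rcases eq_or_ne i t with rfl | hit
    exacts [⟨j, hij.symm, hj⟩, ⟨i, hit, hi⟩]
  obtain ⟨s, hsr, hst⟩ := exists_ne_and_ne hd r t
  have hoff : ∀ {u}, u ≠ t → α * phase n u + β = 0 := fun {u} hu => by
    simpa [hu] using congrFun hαβ u
  have hα : α = 0 := mul_right_cancel₀ (sub_ne_zero.2 (phase_ne_phase (hco hsr.symm) hr))
    (by linear_combination hoff hrt - hoff hst)
  have hβ : β = 0 := by simpa [hα] using hoff hrt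
  simpa [hα, hβ] using congrFun hαβ t

theorem eq_or_eq_zero_of_phase_mem_span (hd : 3 ≤ d)
    (hco : Pairwise (Function.onFun Nat.Coprime q)) {n m : Cell d q} {i j : Fin d} (hij : i ≠ j)
    (hi : n i ≠ 0) (hj : n j ≠ 0) (hm : phase m ∈ Submodule.span ℂ {phase n, 1}) :
    m = n ∨ m = 0 := by
  obtain ⟨β, α, hαβ⟩ := Submodule.mem_span_pair.1 hm
  have hcomb : ∀ t, phase m t = α + β * phase n t := fun t => by
    simpa [add_comm] using (congrFun hαβ t).symm
  obtain ⟨k, hki, hkj⟩ := exists_ne_and_ne hd i j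
  have hnorm : ∀ t, ‖α + β * phase n t‖ = 1 := fun t => by rw [← hcomb, norm_phase]
  rcases eq_zero_or_eq_zero_of_norm_add_mul_eq_one (norm_phase n i) (norm_phase n j)
    (norm_phase n k) (phase_ne_phase (hco hij) hi) (phase_ne_phase (hco hki.symm) hi)
    (phase_ne_phase (hco hkj.symm) hj) (hnorm i) (hnorm j) (hnorm k) with rfl | rfl
  · have hβ : β = 1 := eq_one_of_phase_eq_mul (n := m) (m := n) (hco hij)
      (by simp [hcomb]) (by simp [hcomb])
    exact .inl (phase_injective (funext fun t => by simp [hcomb, hβ]))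
  · have hα : α = 1 := eq_one_of_phase_eq_mul (n := m) (m := 0) (hco hij)
      (by simp [hcomb, phase_zero]) (by simp [hcomb, phase_zero])
    exact .inr (phase_injective (funext fun t => by simp [hcomb, hα, phase_zero]))

theorem exists_direction_vanishing_on_pair (hd : 3 ≤ d)
    (hco : Pairwise (Function.onFun Nat.Coprime q)) {n : Cell d q} {i j : Fin d} (hij : i ≠ j)
    (hi : n i ≠ 0) (hj : n j ≠ 0) :
    ∃ a : Fin d → ℂ, (∀ t, a t ≠ 0) ∧ ∀ m : Cell d q, phase m ⬝ᵥ a = 0 ↔ m = n ∨ m = 0 := by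
  let v : Fin d ⊕ {m : Cell d q // ¬(m = n ∨ m = 0)} → Fin d → ℂ :=
    Sum.elim (fun t => Pi.single t 1) fun m => phase m.1
  obtain ⟨a, ha, hne⟩ := exists_dotProduct_eq_zero_and_forall_ne_zero (u := ![phase n, 1]) (v := v)
    (by
      rw [Matrix.range_cons, Matrix.range_cons, Matrix.range_empty, Set.union_empty,
        Set.singleton_union]
      rintro (t | m)
      exacts [single_notMem_span_phase hd hco hij hi hj t,
        mt (eq_or_eq_zero_of_phase_mem_span hd hco hij hi hj) m.2])
  refine ⟨a, fun t => by simpa [v] using hne (.inl t), fun m => ⟨fun hm => ?_, ?_⟩⟩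
  · by_contra hcon
    exact hne (.inr ⟨m, hcon⟩) hm
  · rintro (rfl | rfl)
    exacts [ha 0, by simpa [phase_zero] using ha 1]

variable {V Y : (Fin d → ℤ) → ℝ} {lam : ℂ}

theorem dft_zero_eq_of_floquetDet_eq (hd : 3 ≤ d) (hco : Pairwise (Function.onFun Nat.Coprime q))
    (h : ∀ z, (∀ t, z t ≠ 0) → floquetDet d q V z lam = floquetDet d q Y z lam) :
    dft d q V 0 = dft d q Y 0 := by
  let e : Fin 0 → Fin d := Fin.elim0
  have he : Function.Injective e := fun i => i.elim0
  have hdet : ∀ U : (Fin d → ℤ) → ℝ,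
      floquetDet 0 (q ∘ e) (blockAverage q e U) Fin.elim0 0 = dft d q U 0 := fun U => by
    have hextend : ∀ l : Fin 0 → ℤ, Function.extend e l 0 = 0 := fun l => funext fun t =>
      Function.extend_apply' _ _ _ (by simp)
    rw [floquetDet_eq, Matrix.det_unique]
    simp [symbol, potentialMatrix, dft_blockAverage he, hextend]
  rw [← hdet, ← hdet]
  exact floquetIsospectral_blockAverage_of_nontrivial_compl hco h he
    ⟨⟨0, by omega⟩, by simp, ⟨1, by omega⟩, by simp, by simp⟩ _ (fun i => i.elim0) 0

theorem norm_dft_eq_of_floquetDet_eq (hd : 3 ≤ d) (hco : Pairwise (Function.onFun Nat.Coprime q))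
    (h : ∀ z, (∀ t, z t ≠ 0) → floquetDet d q V z lam = floquetDet d q Y z lam)
    {l : Fin d → ℤ} {i j : Fin d} (hij : i ≠ j) (hi : (l i : ZMod (q i)) ≠ 0)
    (hj : (l j : ZMod (q j)) ≠ 0) : ‖dft d q V l‖ = ‖dft d q Y l‖ := by
  obtain ⟨n, hn⟩ := exists_latticePoint_congr q l
  have hne : ∀ {t}, (l t : ZMod (q t)) ≠ 0 → n t ≠ 0 := fun {t} hl h0 => hl <| by
    simp [← hn, latticePoint, h0]
  obtain ⟨a, ha, hker⟩ := exists_direction_vanishing_on_pair hd hco hij (hne hi) (hne hj)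
  have hn0 : n ≠ 0 := fun h0 => hne hi (by rw [h0, Pi.zero_apply])
  have hdet := det_rayMatrix_submatrix_eq h (b := 0) (fun t => .inl (ha t)) (φ := ![n, 0])
    (by
      intro x y hxy
      fin_cases x <;> fin_cases y <;> simp_all)
    (fun m => by
      rw [hker, Matrix.range_cons, Matrix.range_cons, Matrix.range_empty, Set.union_empty]
      rfl)
  have hexpand : ∀ U : (Fin d → ℤ) → ℝ, ((rayMatrix U lam a 0).submatrix ![n, 0] ![n, 0]).det =
      (raySymbol a 0 n - lam + dft d q U 0) * (raySymbol a 0 (0 : Cell d q) - lam + dft d q U 0) -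
        (‖dft d q U l‖ : ℂ) ^ 2 := fun U => by
    have hl : potentialMatrix q U n 0 = dft d q U l := dft_congr U fun t => by
      simpa [latticePoint] using hn t
    have hl' : potentialMatrix q U 0 n = (starRingEnd ℂ) (dft d q U l) := by
      rw [← dft_neg]
      exact dft_congr U fun t => by simp [← hn, latticePoint]
    have hdiag : ∀ m, potentialMatrix q U m m = dft d q U 0 := fun m =>
      dft_congr U fun t => by simp
    rw [Matrix.det_fin_two, ← Complex.mul_conj']
    simp [rayMatrix, hn0, hn0.symm, hl, hl', hdiag]
  rw [hexpand, hexpand, dft_zero_eq_of_floquetDet_eq hd hco h, sub_right_inj] at hdet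
  have hsq : ‖dft d q V l‖ ^ 2 = ‖dft d q Y l‖ ^ 2 := by exact_mod_cast hdet
  exact (sq_eq_sq₀ (norm_nonneg _) (norm_nonneg _)).1 hsq

end MixedCoefficients

section Separability

theorem sum_filter_lt_add_le {r : ℕ} (D : Fin r → ℕ) {j j' : Fin r} (h : j < j') :
    ∑ b with b < j, D b + D j ≤ ∑ b with b < j', D b := by
  rw [add_comm, ← Finset.sum_insert (by simp)]
  refine Finset.sum_le_sum_of_subset fun b hb => ?_
  simp only [Finset.mem_insert, Finset.mem_filter, Finset.mem_univ, true_and] at hb ⊢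
  rcases hb with rfl | hb
  exacts [h, hb.trans h]

theorem bijective_blockEmbed {r d : ℕ} (D : Fin r → ℕ) (hsum : ∑ j, D j = d) :
    Function.Bijective fun p : Σ j, Fin (D j) => blockEmbed D hsum p.1 p.2 := by
  refine (Fintype.bijective_iff_injective_and_card _).2 ⟨?_, by simp [hsum]⟩
  rintro ⟨j, i⟩ ⟨j', i'⟩ h
  have hval : ∑ b with b < j, D b + (i : ℕ) = ∑ b with b < j', D b + (i' : ℕ) := congrArg Fin.val h
  rcases lt_trichotomy j j' with hlt | rfl | hlt
  · have := sum_filter_lt_add_le D hlt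
    omega
  · rw [Fin.ext (Nat.add_left_cancel hval)]
  · have := sum_filter_lt_add_le D hlt
    omega

variable {d : ℕ} {q : Fin d → ℕ} {ι : Type*} {D : ι → ℕ} {e : ∀ j, Fin (D j) → Fin d}

theorem injective_of_bijective_sigma
    (he : Function.Bijective fun p : Σ j, Fin (D j) => e p.1 p.2) (j : ι) :
    Function.Injective (e j) :=
  he.1.comp sigma_mk_injective

theorem notMem_range_of_ne (he : Function.Bijective fun p : Σ j, Fin (D j) => e p.1 p.2)
    {j j' : ι} (h : j ≠ j') (i : Fin (D j)) : e j i ∉ Set.range (e j') := by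
  rintro ⟨i', hi'⟩
  exact h (congrArg Sigma.fst (@he.1 ⟨j', i'⟩ ⟨j, i⟩ hi')).symm

/-- The Fourier coefficients of `V` vanish at the frequencies which are nonzero on two different
blocks. This is the Fourier side of separability. -/
def MixedModesVanish (q : Fin d → ℕ) (e : ∀ j, Fin (D j) → Fin d) (V : (Fin d → ℤ) → ℝ) : Prop :=
  ∀ (l : Fin d → ℤ) (j j' : ι) (i : Fin (D j)) (i' : Fin (D j')), j ≠ j' →
    (l (e j i) : ZMod (q (e j i))) ≠ 0 → (l (e j' i') : ZMod (q (e j' i'))) ≠ 0 → dft d q V l = 0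

variable [∀ t, NeZero (q t)]

theorem mixedModesVanish_of_separable [Fintype ι]
    (he : Function.Bijective fun p : Σ j, Fin (D j) => e p.1 p.2) {V : (Fin d → ℤ) → ℝ}
    {Vj : ∀ j, (Fin (D j) → ℤ) → ℝ} (hV : ∀ x, V x = ∑ j, Vj j (x ∘ e j)) :
    MixedModesVanish q e V := by
  intro l j j' i i' hjj' hi hi'
  rw [funext hV, dft_sum]
  refine Finset.sum_eq_zero fun b _ => ?_
  rw [dft_pullback (injective_of_bijective_sigma he b), if_neg]
  intro h
  rcases ne_or_eq j b with hb | rfl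
  · exact hi (h _ (notMem_range_of_ne he hb i))
  · exact hi' (h _ (notMem_range_of_ne he hjj'.symm i'))

theorem blockAverage_of_separable [Fintype ι]
    (he : Function.Bijective fun p : Σ j, Fin (D j) => e p.1 p.2) {V : (Fin d → ℤ) → ℝ}
    {Vj : ∀ j, (Fin (D j) → ℤ) → ℝ} (hV : ∀ x, V x = ∑ j, Vj j (x ∘ e j)) (j : ι) :
    ∃ c : ℝ, ∀ x, blockAverage q (e j) V x = Vj j x + c := by
  classical
  refine ⟨𝔼 n : Cell d q, ∑ b ∈ Finset.univ.erase j, Vj b (latticePoint n ∘ e b), fun x => ?_⟩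
  have hsplit : ∀ n : Cell d q, V (Function.extend (e j) x (latticePoint n)) =
      Vj j x + ∑ b ∈ Finset.univ.erase j, Vj b (latticePoint n ∘ e b) := fun n => by
    rw [hV, ← Finset.add_sum_erase _ _ (Finset.mem_univ j),
      Function.extend_comp (injective_of_bijective_sigma he j)]
    refine congrArg _ (Finset.sum_congr rfl fun b hb => congrArg _ (funext fun i => ?_))
    exact Function.extend_apply' _ _ _ (notMem_range_of_ne he (Finset.ne_of_mem_erase hb) i)
  simp only [blockAverage, hsplit, Finset.expect_add_distrib, Fintype.expect_const]

theorem dft_blockAverage_comp {k : ℕ} {e : Fin k → Fin d} (he : Function.Injective e)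
    (V : (Fin d → ℤ) → ℝ) (l : Fin d → ℤ) :
    dft d q (fun x => blockAverage q e V (x ∘ e)) l =
      if ∀ t ∉ Set.range e, (l t : ZMod (q t)) = 0 then dft d q V l else 0 := by
  rw [dft_pullback he, dft_blockAverage he]
  refine if_ctx_congr Iff.rfl (fun h => dft_congr V fun t => ?_) fun _ => rfl
  by_cases ht : t ∈ Set.range e
  · obtain ⟨i, rfl⟩ := ht
    rw [he.extend_apply, Function.comp_apply]
  · rw [Function.extend_apply' _ _ _ ht, h t ht, Pi.zero_apply, Int.cast_zero]

theorem sum_dft_blockAverage_comp [Fintype ι]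
    (he : Function.Bijective fun p : Σ j, Fin (D j) => e p.1 p.2) {V : (Fin d → ℤ) → ℝ}
    (hm : MixedModesVanish q e V) {l : Fin d → ℤ} (hl : ∃ t, (l t : ZMod (q t)) ≠ 0) :
    ∑ j, dft d q (fun x => blockAverage q (e j) V (x ∘ e j)) l = dft d q V l := by
  obtain ⟨t, ht⟩ := hl
  obtain ⟨⟨j, i⟩, rfl⟩ := he.2 t
  rw [Finset.sum_congr rfl fun b _ =>
      dft_blockAverage_comp (injective_of_bijective_sigma he b) V l,
    Finset.sum_eq_single j (fun b _ hb => ?_) (by simp), ite_eq_left_iff]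
  · intro h
    push Not at h
    obtain ⟨t', hmem, ht'⟩ := h
    obtain ⟨⟨j', i'⟩, rfl⟩ := he.2 t'
    exact (hm l j j' i i' (by rintro rfl; exact hmem ⟨i', rfl⟩) ht ht').symm
  · exact if_neg fun h => ht (h _ (notMem_range_of_ne he hb.symm i))

theorem eq_sum_blockAverage [Fintype ι]
    (he : Function.Bijective fun p : Σ j, Fin (D j) => e p.1 p.2) {V : (Fin d → ℤ) → ℝ}
    (hV : IsPeriodicPotential d q V) (hm : MixedModesVanish q e V) (x : Fin d → ℤ) :
    V x = ∑ j, blockAverage q (e j) V (x ∘ e j) + (1 - Fintype.card ι) * potentialAvg d q V := by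
  refine congrFun (eq_of_dft_eq hV (U := fun x => ∑ j, blockAverage q (e j) V (x ∘ e j) +
    (1 - Fintype.card ι) * potentialAvg d q V) (fun x γ hγ => ?_) fun l => ?_) x
  · exact congrArg (· + _) (Finset.sum_congr rfl fun j _ =>
      isPeriodicPotential_blockAverage_comp (injective_of_bijective_sigma he j) hV x γ hγ)
  · rw [dft_add, dft_sum, dft_const]
    split_ifs with hl
    · rw [Finset.sum_congr rfl fun b _ =>
        dft_blockAverage_comp (injective_of_bijective_sigma he b) V l]
      simp only [hl, implies_true, if_true, Finset.sum_const, Finset.card_univ, nsmul_eq_mul]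
      rw [dft_congr V (l' := 0) (by simpa using hl), dft_zero]
      push_cast
      ring
    · rw [sum_dft_blockAverage_comp he hm (not_forall.1 hl), add_zero]

end Separability

section EnergyShift

variable {d : ℕ} {q : Fin d → ℕ} [∀ t, NeZero (q t)]

theorem potentialMatrix_add (V U : (Fin d → ℤ) → ℝ) :
    potentialMatrix q (fun x => V x + U x) = potentialMatrix q V + potentialMatrix q U := by
  ext n m
  exact dft_add V U _

theorem cell_sub_eq_zero_iff {n m : Cell d q} {t : Fin d} :
    ((((n t : ℕ) : ℤ) - ((m t : ℕ) : ℤ) : ℤ) : ZMod (q t)) = 0 ↔ n t = m t := by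
  rw [Int.cast_sub, sub_eq_zero, Int.cast_natCast, Int.cast_natCast]
  exact (bijective_natCast_zmod (q t)).1.eq_iff

theorem potentialMatrix_const (c : ℝ) :
    potentialMatrix q (fun _ => c) = Matrix.diagonal fun _ => (c : ℂ) := by
  ext n m
  simp only [potentialMatrix, Matrix.of_apply, dft_const, cell_sub_eq_zero_iff, ← funext_iff,
    Matrix.diagonal_apply]

theorem floquetDet_add_const (V : (Fin d → ℤ) → ℝ) (c : ℝ) (z : Fin d → ℂ) (lam : ℂ) :
    floquetDet d q (fun x => V x + c) z lam = floquetDet d q V z (lam - c) := by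
  rw [floquetDet_eq, floquetDet_eq, potentialMatrix_add, potentialMatrix_const, add_left_comm,
    Matrix.diagonal_add, add_comm]
  simp only [sub_sub_eq_add_sub, sub_add_eq_add_sub]

theorem FloquetIsospectral.add_const {V Y : (Fin d → ℤ) → ℝ} (h : FloquetIsospectral d q V Y)
    (c : ℝ) : FloquetIsospectral d q (fun x => V x + c) fun x => Y x + c := fun z hz lam => by
  rw [floquetDet_add_const, floquetDet_add_const, h z hz]

end EnergyShift

section KroneckerSum

variable {n m : Type*} [Fintype n] [DecidableEq n] [Fintype m] [DecidableEq m]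

theorem det_sub_scalar (A : Matrix n n ℂ) (a : ℂ) :
    (A - Matrix.scalar n a).det = (A.charpoly.roots.map (· - a)).prod := by
  rw [Matrix.det_eq_prod_roots_charpoly, Matrix.charpoly_sub_scalar]
  congr 1
  simpa using roots_comp_C_mul_X_add_C A.charpoly 1 a isUnit_one

theorem det_aeval_of_monic (A : Matrix n n ℂ) {p : ℂ[X]} (hp : p.Monic) :
    (aeval A p).det = (A.charpoly.roots.map p.eval).prod := by
  let detAeval : ℂ[X] →* ℂ :=
    Matrix.detMonoidHom.comp ((aeval A : ℂ[X] →ₐ[ℂ] Matrix n n ℂ) : ℂ[X] →* Matrix n n ℂ)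
  have hlin : ∀ a, detAeval (X - C a) = (A.charpoly.roots.map (· - a)).prod := fun a => by
    rw [← det_sub_scalar]
    simp [detAeval, Matrix.algebraMap_eq_diagonal, Pi.algebraMap_def]
  have heval : p.eval = fun x => (p.roots.map (x - ·)).prod := funext fun x =>
    (IsAlgClosed.splits p).eval_eq_prod_roots_of_monic hp x
  calc (aeval A p).det = detAeval (p.roots.map (X - C ·)).prod := by
        rw [← (IsAlgClosed.splits p).eq_prod_roots_of_monic hp]
        rfl
    _ = (A.charpoly.roots.map p.eval).prod := by
        rw [map_multiset_prod, Multiset.map_map, heval, Multiset.prod_map_prod_map]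
        exact congrArg _ (Multiset.map_congr rfl fun a _ => hlin a)

theorem det_kronecker_sum (A : Matrix n n ℂ) (B : Matrix m m ℂ) :
    (Matrix.kronecker B (1 : Matrix n n ℂ) + Matrix.kronecker (1 : Matrix m m ℂ) A).det =
      (A.charpoly.roots.map fun x => (B + Matrix.scalar m x).det).prod := by
  have heval : (-B).charpoly.eval = fun x => (B + Matrix.scalar m x).det := funext fun x => by
    rw [Matrix.eval_charpoly, sub_neg_eq_add, add_comm]
  rw [← heval, ← det_aeval_of_monic A (Matrix.charpoly_monic _), Matrix.charpoly]
  refine ((Matrix.det_det (-B).charmatrix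
    (aeval A : ℂ[X] →ₐ[ℂ] Matrix n n ℂ).toRingHom).trans ?_).symm
  congr 1
  ext ⟨i, k⟩ ⟨j, l⟩
  by_cases hij : i = j <;> by_cases hkl : k = l <;>
    simp [hij, hkl, Matrix.algebraMap_matrix_apply, add_comm]

end KroneckerSum

section TwoBlocks

variable {d k k' : ℕ} {q : Fin d → ℕ} {e : Fin k → Fin d} {e' : Fin k' → Fin d}

theorem bijective_cell_split (he : Function.Bijective (Sum.elim e e')) :
    Function.Bijective fun n : Cell d q =>
      ((fun i => n (e' i), fun i => n (e i)) : Cell k' (q ∘ e') × Cell k (q ∘ e)) := by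
  refine ⟨fun n m h => ?_, fun ⟨a', a⟩ => ?_⟩
  · obtain ⟨h', h⟩ := Prod.ext_iff.1 h
    funext t
    obtain ⟨i | i, rfl⟩ := he.2 t
    exacts [congrFun h i, congrFun h' i]
  · let s := Equiv.ofBijective _ he
    let n : Cell d q := s.piCongrLeft (fun t => Fin (q t)) (Sum.rec a a')
    have hn : ∀ p, n (s p) = Sum.rec (motive := fun p => Fin (q (s p))) a a' p :=
      Equiv.piCongrLeft_apply_apply (fun t => Fin (q t)) s _
    exact ⟨n, Prod.ext (funext fun i => hn (.inr i)) (funext fun i => hn (.inl i))⟩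

theorem symbol_split (he : Function.Bijective (Sum.elim e e')) (z : Fin d → ℂ) (n : Cell d q) :
    symbol z n = symbol (q := q ∘ e) (z ∘ e) (fun i => n (e i)) +
      symbol (q := q ∘ e') (z ∘ e') (fun i => n (e' i)) := by
  unfold symbol
  rw [← (Equiv.ofBijective _ he).sum_comp, Fintype.sum_sum_type]
  rfl

variable [∀ t, NeZero (q t)]

theorem potentialMatrix_pullback (he : Function.Bijective (Sum.elim e e'))
    (U : (Fin k → ℤ) → ℝ) (n m : Cell d q) :
    potentialMatrix q (fun x => U (x ∘ e)) n m =
      if (fun i => n (e' i)) = (fun i => m (e' i))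
      then potentialMatrix (q ∘ e) U (fun i => n (e i)) (fun i => m (e i)) else 0 := by
  have hcompl : ∀ t, t ∉ Set.range e ↔ t ∈ Set.range e' := fun t => by
    obtain ⟨i | i, rfl⟩ := he.2 t
    · simpa using fun j hj => Sum.inr_ne_inl (he.1 hj)
    · simpa using fun j hj => Sum.inl_ne_inr (he.1 hj)
  have hinj : Function.Injective e := he.1.comp Sum.inl_injective
  rw [potentialMatrix, Matrix.of_apply, dft_pullback hinj]
  simp only [cell_sub_eq_zero_iff, hcompl, Set.forall_mem_range, funext_iff]
  rfl

theorem floquetDet_eq_prod_roots (he : Function.Bijective (Sum.elim e e'))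
    (U : (Fin k → ℤ) → ℝ) (U' : (Fin k' → ℤ) → ℝ) (z : Fin d → ℂ) (lam : ℂ) :
    floquetDet d q (fun x => U (x ∘ e) + U' (x ∘ e')) z lam =
      ((floquetMatrix k (q ∘ e) U (z ∘ e)).charpoly.roots.map fun x =>
        floquetDet k' (q ∘ e') U' (z ∘ e') (lam - x)).prod := by
  have hblock : ∀ x, floquetDet k' (q ∘ e') U' (z ∘ e') (lam - x) =
      (floquetMatrix k' (q ∘ e') U' (z ∘ e') - lam • 1 + Matrix.scalar _ x).det := fun x => by
    rw [floquetDet, sub_smul, Matrix.scalar_apply, ← Matrix.smul_one_eq_diagonal, ← sub_add]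
  have he' : Function.Bijective (Sum.elim e' e) := by
    rw [← Sum.elim_swap]
    exact he.comp (Equiv.sumComm _ _).bijective
  have hinj : ∀ n m : Cell d q, n = m ↔ (fun i => n (e i)) = (fun i => m (e i)) ∧
      (fun i => n (e' i)) = (fun i => m (e' i)) := fun n m => by
    rw [← (bijective_cell_split he).1.eq_iff, Prod.ext_iff, and_comm]
  simp only [hblock]
  rw [← det_kronecker_sum, floquetDet,
    ← Matrix.det_submatrix_equiv_self (Equiv.ofBijective _ (bijective_cell_split he))]
  congr 1
  ext n m
  simp only [floquetMatrix_eq, Matrix.submatrix_apply, Matrix.add_apply, Matrix.sub_apply,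
    Matrix.kronecker, Matrix.kroneckerMap_apply, Equiv.ofBijective_apply, Matrix.smul_apply,
    Matrix.one_apply, Matrix.diagonal_apply, potentialMatrix_add, potentialMatrix_pullback he,
    potentialMatrix_pullback he', hinj n m, symbol_split he, smul_eq_mul]
  by_cases h : (fun i => n (e i)) = fun i => m (e i) <;>
    by_cases h' : (fun i => n (e' i)) = fun i => m (e' i) <;>
    simp only [h, h', and_true, and_false, if_true, if_false] <;> ring

end TwoBlocks

section OneDimensional

theorem eq_monomial_of_comp_C_mul_X {R : Type*} [CommRing R] [IsDomain R] {ζ : R} {N : ℕ}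
    (hζ : IsPrimitiveRoot ζ N) {r : R[X]} (hr : r.comp (C ζ * X) = r) (h0 : r.coeff 0 = 0)
    (hdeg : r.degree < (N * 2 : ℕ)) : r = monomial N (r.coeff N) := by
  ext j
  rw [coeff_monomial]
  split_ifs with hj
  · rw [hj]
  · by_cases hdvd : N ∣ j
    · obtain ⟨x, rfl⟩ := hdvd
      obtain rfl | rfl | hx : x = 0 ∨ x = 1 ∨ 2 ≤ x := by omega
      · rw [mul_zero, h0]
      · exact absurd (mul_one N).symm hj
      · exact coeff_eq_zero_of_degree_lt
          (hdeg.trans_le (by exact_mod_cast Nat.mul_le_mul_left N hx))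
    · have hcoeff := congrArg (coeff · j) hr
      simp only [comp_C_mul_X_coeff] at hcoeff
      by_contra hne
      exact hdvd <| (hζ.pow_eq_one_iff_dvd j).1 <|
        mul_left_cancel₀ hne (hcoeff.trans (mul_one _).symm)

theorem exists_laurentDet_eq {W : Type*} [Fintype W] [DecidableEq W] [Nonempty W] {c : W → ℂ}
    (hc : ∀ n, c n ≠ 0) (B : Matrix W W ℂ) (E : ℂ) : ∃ w, w ≠ 0 ∧ laurentDet c B w = E := by
  let g := (quadraticPencil c (fun n => (c n)⁻¹) B).det - C E * X ^ Fintype.card W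
  have hN : Fintype.card W ≠ 0 := Fintype.card_ne_zero
  have hcoeff : g.coeff (Fintype.card W * 2) ≠ 0 := by
    rw [coeff_sub, coeff_det_quadraticPencil, coeff_C_mul_X_pow, if_neg (by omega), sub_zero]
    exact Finset.prod_ne_zero_iff.2 fun n _ => hc n
  have hdeg : g.degree ≠ 0 := fun h => hcoeff <| coeff_eq_zero_of_natDegree_lt <| by
    rw [natDegree_eq_of_degree_eq_some h]
    positivity
  obtain ⟨w, hw⟩ := IsAlgClosed.exists_root g hdeg
  have hw0 : w ≠ 0 := by
    rintro rfl
    refine Finset.prod_ne_zero_iff.2 (fun n (_ : n ∈ Finset.univ) => inv_ne_zero (hc n)) ?_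
    simpa [g, eval_det_quadraticPencil, hN] using hw
  refine ⟨w, hw0, mul_left_cancel₀ (pow_ne_zero (Fintype.card W) hw0) ?_⟩
  rw [IsRoot, eval_sub, eval_det_quadraticPencil_inv hc B hw0] at hw
  simpa [sub_eq_zero, mul_comm E] using hw

variable {d : ℕ} {q : Fin d → ℕ}

theorem cast_cell_add (n m : Cell d q) (t : Fin d) :
    (((n + m) t : ℕ) : ZMod (q t)) = ((n t : ℕ) : ZMod (q t)) + ((m t : ℕ) : ZMod (q t)) := by
  rw [Pi.add_apply, Fin.val_add, ZMod.natCast_mod, Nat.cast_add]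

variable [∀ t, NeZero (q t)]

theorem phase_add (n m : Cell d q) : phase (n + m) = phase n * phase m := by
  funext t
  rw [Pi.mul_apply, phase_eq_stdAddChar, cast_cell_add, AddChar.map_add_eq_mul,
    ← phase_eq_stdAddChar, ← phase_eq_stdAddChar]

theorem isPrimitiveRoot_phase_one (t : Fin d) : IsPrimitiveRoot (phase (1 : Cell d q) t) (q t) := by
  have hone : (((1 : Cell d q) t : ℕ) : ZMod (q t)) = (1 : ℤ) := by
    rw [Pi.one_apply, Fin.val_one', ZMod.natCast_mod, Nat.cast_one, Int.cast_one]
  rw [phase_eq_stdAddChar, hone, ZMod.stdAddChar_coe, Int.cast_one, mul_one]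
  exact Complex.isPrimitiveRoot_exp _ (NeZero.ne _)

/-- Translating the index cell by `m` multiplies the quasimomenta by the phases of `m`. -/
theorem floquetDet_phase_mul (V : (Fin d → ℤ) → ℝ) (m : Cell d q) (z : Fin d → ℂ) (lam : ℂ) :
    floquetDet d q V (phase m * z) lam = floquetDet d q V z lam := by
  rw [floquetDet_eq, floquetDet_eq, ← Matrix.det_submatrix_equiv_self (Equiv.addRight m)
    (Matrix.diagonal (fun n => symbol z n - lam) + potentialMatrix q V)]
  congr 1
  rw [Matrix.submatrix_add, Pi.add_apply, Pi.add_apply, Matrix.submatrix_diagonal_equiv]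
  congr 1
  · simp only [Function.comp_def, symbol, Equiv.coe_addRight, phase_add, Pi.mul_apply, mul_assoc]
  · ext n n'
    refine dft_congr V fun t => ?_
    simp only [Equiv.coe_addRight, Int.cast_sub, Int.cast_natCast, cast_cell_add,
      add_sub_add_right_eq_sub]

variable {q : Fin 1 → ℕ}

theorem floquetDet_one_eq_laurentDet (U : (Fin 1 → ℤ) → ℝ) (w lam : ℂ) :
    floquetDet 1 q U (fun _ => w) lam =
      laurentDet (phase · 0) (Matrix.diagonal (fun _ => -lam) + potentialMatrix q U) w := by
  have hw : Function.update (fun _ : Fin 1 => (0 : ℂ)) 0 w = fun _ => w :=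
    funext fun t => by rw [Subsingleton.elim t 0, Function.update_self]
  rw [← hw, floquetDet_update]
  simp [symbol]

variable [∀ t, NeZero (q t)]

/-- Only the powers `w ^ (k q)` with `|k| ≤ 1` occur in `floquetDet 1 q U w lam`, and the
coefficients for `k = ±1` do not depend on `lam`. -/
theorem exists_floquetDet_one_eq_add (U : (Fin 1 → ℤ) → ℝ) (lam lam' : ℂ) :
    ∃ b : ℂ, ∀ w, w ≠ 0 → floquetDet 1 q U (fun _ => w) lam =
      floquetDet 1 q U (fun _ => w) lam' + b := by
  have hcard : Fintype.card (Cell 1 q) = q 0 := by simp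
  let p : ℂ → ℂ[X] := fun μ => (quadraticPencil (fun n : Cell 1 q => phase n 0)
    (fun n => (phase n 0)⁻¹) (Matrix.diagonal (fun _ => -μ) + potentialMatrix q U)).det
  have hp : ∀ μ w, w ≠ 0 → (p μ).eval w = w ^ q 0 * floquetDet 1 q U (fun _ => w) μ :=
    fun μ w hw => by
      rw [floquetDet_one_eq_laurentDet, ← hcard]
      exact eval_det_quadraticPencil_inv (phase_ne_zero · 0) _ hw
  have hζ := isPrimitiveRoot_phase_one (q := q) 0
  have hcomp : ∀ μ, (p μ).comp (C (phase (1 : Cell 1 q) 0) * X) = p μ := fun μ => by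
    refine eq_of_infinite_eval_eq _ _ ((Set.finite_singleton (0 : ℂ)).infinite_compl.mono ?_)
    intro w (hw : w ≠ 0)
    have hshift := floquetDet_phase_mul U (1 : Cell 1 q) (fun _ => w) μ
    rw [Set.mem_ofPred_eq, eval_comp, eval_mul, eval_C, eval_X,
      hp μ _ (mul_ne_zero (phase_ne_zero _ _) hw), hp μ w hw, mul_pow, hζ.pow_eq_one, one_mul,
      ← hshift]
    congr
    funext t
    rw [Subsingleton.elim t 0]
    rfl
  have hmono : p lam - p lam' = monomial (q 0) ((p lam - p lam').coeff (q 0)) := by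
    refine eq_monomial_of_comp_C_mul_X hζ (by rw [sub_comp, hcomp, hcomp]) ?_ ?_
    · simp [p, coeff_zero_eq_eval_zero, eval_det_quadraticPencil]
    · rw [← hcard]
      exact degree_det_quadraticPencil_sub_lt _ _ _ _ _
  refine ⟨(p lam - p lam').coeff (q 0), fun w hw => mul_left_cancel₀ (pow_ne_zero (q 0) hw) ?_⟩
  have heval := congrArg (eval w) hmono
  rw [eval_sub, hp lam w hw, hp lam' w hw, eval_monomial] at heval
  linear_combination heval

theorem exists_floquetDet_one_eq_add_eval (U : (Fin 1 → ℤ) → ℝ) (lam : ℂ) :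
    ∃ f : ℂ[X], f.natDegree = q 0 ∧ ∀ w, w ≠ 0 → ∀ x,
      floquetDet 1 q U (fun _ => w) (lam - x) = floquetDet 1 q U (fun _ => w) lam + f.eval x := by
  let A := lam • (1 : Matrix (Cell 1 q) (Cell 1 q) ℂ) - floquetMatrix 1 q U fun _ => 1
  let a := floquetDet 1 q U (fun _ => 1) lam
  have hdeg : A.charpoly.natDegree = q 0 := by simp [Matrix.charpoly_natDegree_eq_dim]
  refine ⟨A.charpoly - C a, by rw [natDegree_sub_C, hdeg], fun w hw x => ?_⟩
  have heval : A.charpoly.eval x = floquetDet 1 q U (fun _ => 1) (lam - x) := by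
    rw [Matrix.eval_charpoly, floquetDet, Matrix.scalar_apply, ← Matrix.smul_one_eq_diagonal,
      sub_smul, sub_sub_eq_add_sub, sub_sub_eq_add_sub, add_comm]
  obtain ⟨b, hb⟩ := exists_floquetDet_one_eq_add (q := q) U (lam - x) lam
  rw [eval_sub, eval_C, heval, hb w hw, hb 1 one_ne_zero, add_sub_cancel_left]

theorem exists_floquetDet_one_eq (U : (Fin 1 → ℤ) → ℝ) (lam E : ℂ) :
    ∃ w, w ≠ 0 ∧ floquetDet 1 q U (fun _ => w) lam = E := by
  simp only [floquetDet_one_eq_laurentDet]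
  exact exists_laurentDet_eq (fun n : Cell 1 q => phase_ne_zero n 0) _ E

end OneDimensional

section EigenvaluesAtInfinity

theorem multiset_eq_of_map_eq_map {α β : Type*} {f : α → β} {s t : Multiset α}
    (h : s.map f = t.map f) (hinj : ∀ x ∈ s, ∀ y ∈ t, f x = f y → x = y) : s = t := by
  rw [← Multiset.rel_eq] at h ⊢
  exact (Multiset.rel_map.1 h).mono hinj

theorem multiset_eq_of_prod_map_add_eq {s t : Multiset ℂ}
    (h : ∀ E, (s.map (E + ·)).prod = (t.map (E + ·)).prod) : s = t := by
  have hpoly : ((s.map Neg.neg).map (X - C ·)).prod = ((t.map Neg.neg).map (X - C ·)).prod := by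
    refine Polynomial.funext fun E => ?_
    simpa [eval_multiset_prod, Multiset.map_map, Function.comp_def] using h E
  have hroots := congrArg roots hpoly
  rw [roots_multiset_prod_X_sub_C, roots_multiset_prod_X_sub_C] at hroots
  exact Multiset.map_injective neg_injective hroots

theorem geom_sum₂_ne_zero {l m : ℂ} {N : ℕ} (hl : l ≠ 0) (hN : N ≠ 0)
    (hlm : l ^ N = m ^ N → l = m) : ∑ j ∈ Finset.range N, l ^ j * m ^ (N - 1 - j) ≠ 0 := by
  obtain rfl | hne := eq_or_ne l m
  · rw [geom_sum₂_self]
    exact mul_ne_zero (Nat.cast_ne_zero.2 hN) (pow_ne_zero _ hl)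
  · intro h
    refine hne (hlm (sub_eq_zero.1 ?_))
    rw [← geom_sum₂_mul, h, zero_mul]

/-- Points `l / σ` and `m / σ` near infinity are separated by `f` because the divided difference
of `f` is dominated by that of its leading term. -/
theorem eventually_eq_of_eval_div_eq {f : ℂ[X]} (hf : f.natDegree ≠ 0) {l m : ℂ} (hl : l ≠ 0)
    (hlm : l ^ f.natDegree = m ^ f.natDegree → l = m) :
    ∀ᶠ p : ℂ × ℂ × ℂ in 𝓝 (0, l, m), p.1 ≠ 0 →
      f.eval (p.2.1 / p.1) = f.eval (p.2.2 / p.1) → p.2.1 = p.2.2 := by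
  set N := f.natDegree with hN
  let G : ℂ × ℂ × ℂ → ℂ := fun p => ∑ i ∈ Finset.range (N + 1), f.coeff i * p.1 ^ (N - i) *
    ∑ j ∈ Finset.range i, p.2.1 ^ j * p.2.2 ^ (i - 1 - j)
  have hG : Continuous G := by fun_prop
  have hG0 : G (0, l, m) ≠ 0 := by
    have hlow : ∀ i ∈ Finset.range N, f.coeff i * (0 : ℂ) ^ (N - i) *
        ∑ j ∈ Finset.range i, l ^ j * m ^ (i - 1 - j) = 0 := fun i hi => by
      rw [zero_pow (Nat.sub_ne_zero_of_lt (Finset.mem_range.1 hi)), mul_zero, zero_mul]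
    simp only [G]
    rw [Finset.sum_range_succ, Finset.sum_eq_zero hlow, zero_add, Nat.sub_self, pow_zero, mul_one]
    have hf0 : f ≠ 0 := fun h => hf (by simp [hN, h])
    exact mul_ne_zero (leadingCoeff_ne_zero.2 hf0) (geom_sum₂_ne_zero hl hf hlm)
  filter_upwards [hG.continuousAt.eventually_ne hG0] with ⟨σ, ξ, η⟩ hne (hσ : σ ≠ 0)
    (heq : f.eval (ξ / σ) = f.eval (η / σ))
  have hhom : ∀ x, σ ^ N * f.eval (x / σ) =
      ∑ i ∈ Finset.range (N + 1), f.coeff i * σ ^ (N - i) * x ^ i := fun x => by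
    rw [eval_eq_sum_range, Finset.mul_sum]
    refine Finset.sum_congr rfl fun i hi => ?_
    rw [div_pow, pow_sub₀ σ hσ (Nat.lt_succ_iff.1 (Finset.mem_range.1 hi))]
    ring
  have hfactor : G (σ, ξ, η) * (ξ - η) = 0 := by
    have hdiff : σ ^ N * f.eval (ξ / σ) - σ ^ N * f.eval (η / σ) = 0 := by rw [heq, sub_self]
    rw [hhom, hhom, ← Finset.sum_sub_distrib] at hdiff
    rw [← hdiff, Finset.sum_mul]
    refine Finset.sum_congr rfl fun i _ => ?_
    rw [mul_assoc, geom_sum₂_mul, mul_sub]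
  exact sub_eq_zero.1 ((mul_eq_zero.1 hfactor).resolve_left hne)

variable {ι n : Type*} [Fintype n] [DecidableEq n] {F : Filter ι} {A B : ι → Matrix n n ℂ}
  {v : n → ℂ}

/-- By Gershgorin's theorem, the eigenvalues of matrices converging to `diagonal v` accumulate only
at the entries of `v`. -/
theorem eventually_forall_mem_spectrum (hA : Tendsto A F (𝓝 (Matrix.diagonal v)))
    {P : ι → ℂ → Prop} (hP : ∀ i, ∀ᶠ p in F ×ˢ 𝓝 (v i), P p.1 p.2) :
    ∀ᶠ s in F, ∀ x ∈ spectrum ℂ (A s), P s x := by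
  have hentry : ∀ i j, Tendsto (fun s => A s i j) F (𝓝 (Matrix.diagonal v i j)) := fun i j =>
    tendsto_pi_nhds.1 (tendsto_pi_nhds.1 hA i) j
  have hradius : ∀ i, Tendsto (fun s => ∑ j ∈ Finset.univ.erase i, ‖A s i j‖) F (𝓝 0) := fun i => by
    have hzero : ∑ j ∈ Finset.univ.erase i, ‖Matrix.diagonal v i j‖ = 0 :=
      Finset.sum_eq_zero fun j hj => by
        rw [Matrix.diagonal_apply_ne v (Finset.ne_of_mem_erase hj).symm, norm_zero]
    rw [← hzero]
    exact tendsto_finsetSum _ fun j _ => (hentry i j).norm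
  have hnear : ∀ i, ∀ᶠ s in F, ∀ x, dist x (A s i i) ≤ ∑ j ∈ Finset.univ.erase i, ‖A s i j‖ →
      P s x := fun i => by
    obtain ⟨S, hS, ε, hε, hSε⟩ : ∃ S ∈ F, ∃ ε > 0, ∀ s ∈ S, ∀ x, dist x (v i) < ε → P s x := by
      obtain ⟨S, hS, T, hT, hST⟩ := Filter.mem_prod_iff.1 (hP i)
      obtain ⟨ε, hε, hεT⟩ := Metric.mem_nhds_iff.1 hT
      exact ⟨S, hS, ε, hε, fun s hs x hx => hST (Set.mk_mem_prod hs (hεT hx))⟩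
    have hdiag : Tendsto (fun s => dist (A s i i) (v i)) F (𝓝 0) := by
      simpa using tendsto_iff_dist_tendsto_zero.1 (hentry i i)
    filter_upwards [hS, ((hradius i).add hdiag).eventually_lt_const (by simpa using hε)]
      with s hs hlt x hx
    exact hSε s hs x ((dist_triangle _ _ _).trans_lt ((add_le_add_left hx _).trans_lt hlt))
  filter_upwards [eventually_all.2 hnear] with s hs x hx
  rw [← Matrix.spectrum_toLin', ← Module.End.hasEigenvalue_iff_mem_spectrum] at hx
  obtain ⟨i, hi⟩ := eigenvalue_mem_ball hx
  exact hs i x hi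

theorem eventually_charpoly_eq {σ : ι → ℂ} (hσ : Tendsto σ F (𝓝 0)) (hσ0 : ∀ᶠ s in F, σ s ≠ 0)
    (hA : Tendsto (fun s => σ s • A s) F (𝓝 (Matrix.diagonal v)))
    (hB : Tendsto (fun s => σ s • B s) F (𝓝 (Matrix.diagonal v))) (hv : ∀ i, v i ≠ 0)
    {f : ℂ[X]} (hf : f.natDegree ≠ 0)
    (hinj : ∀ i j, v i ^ f.natDegree = v j ^ f.natDegree → v i = v j)
    (h : ∀ᶠ s in F, (A s).charpoly.roots.map f.eval = (B s).charpoly.roots.map f.eval) :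
    ∀ᶠ s in F, (A s).charpoly = (B s).charpoly := by
  have hsep : ∀ᶠ s in F, ∀ x ∈ spectrum ℂ (σ s • A s), ∀ y ∈ spectrum ℂ (σ s • B s), σ s ≠ 0 →
      f.eval (x / σ s) = f.eval (y / σ s) → x = y := by
    refine eventually_forall_mem_spectrum hA fun i => ?_
    refine eventually_forall_mem_spectrum (hB.comp tendsto_fst) (P := fun p y => σ p.1 ≠ 0 →
      f.eval (p.2 / σ p.1) = f.eval (y / σ p.1) → p.2 = y) fun j => ?_
    have hlim : Tendsto (fun p : (ι × ℂ) × ℂ => (σ p.1.1, p.1.2, p.2))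
        ((F ×ˢ 𝓝 (v i)) ×ˢ 𝓝 (v j)) (𝓝 (0, v i, v j)) :=
      (hσ.comp (tendsto_fst.comp tendsto_fst)).prodMk_nhds
        ((tendsto_snd.comp tendsto_fst).prodMk_nhds tendsto_snd)
    exact hlim.eventually (eventually_eq_of_eval_div_eq hf (hv i) (hinj i j))
  filter_upwards [hsep, hσ0, h] with s hsep hσ0 hmap
  have hspec : ∀ {M : Matrix n n ℂ} {x : ℂ}, x ∈ M.charpoly.roots →
      σ s * x ∈ spectrum ℂ (σ s • M) := fun {M x} hx => by
    rw [← smul_eq_mul]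
    refine (spectrum.smul_mem_smul_iff (r := Units.mk0 _ hσ0)).2 ?_
    exact Matrix.mem_spectrum_of_isRoot_charpoly (isRoot_of_mem_roots hx)
  have hroots : (A s).charpoly.roots = (B s).charpoly.roots := by
    refine multiset_eq_of_map_eq_map hmap fun x hx y hy hxy => mul_left_cancel₀ hσ0 ?_
    refine hsep _ (hspec hx) _ (hspec hy) hσ0 ?_
    rwa [mul_div_cancel_left₀ x hσ0, mul_div_cancel_left₀ y hσ0]
  rw [(IsAlgClosed.splits _).eq_prod_roots_of_monic (A s).charpoly_monic, hroots,
    ← (IsAlgClosed.splits _).eq_prod_roots_of_monic (B s).charpoly_monic]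

end EigenvaluesAtInfinity

section GenericRays

variable {k : ℕ} {q : Fin k → ℕ}

theorem floquetDet_eq_charpoly_eval (U : (Fin k → ℤ) → ℝ) (z : Fin k → ℂ) (lam : ℂ) :
    floquetDet k q U z lam =
      (-1) ^ Fintype.card (Cell k q) * (floquetMatrix k q U z).charpoly.eval lam := by
  rw [floquetDet, Matrix.eval_charpoly, ← Matrix.det_neg, neg_sub, Matrix.scalar_apply,
    ← Matrix.smul_one_eq_diagonal]

variable [∀ t, NeZero (q t)]

theorem eq_of_phase_eq_smul_phase (hk : 2 ≤ k) (hco : Pairwise (Function.onFun Nat.Coprime q))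
    {n m : Cell k q} {c : ℂ} (h : phase n = c • phase m) : n = m := by
  have hc : c = 1 := eq_one_of_phase_eq_mul (i := ⟨0, by omega⟩) (j := ⟨1, by omega⟩)
    (hco (by simp)) (congrFun h _) (congrFun h _)
  exact phase_injective (by rw [h, hc, one_smul])

theorem eventually_floquetDet_ray_eq_of_map_eval_roots_eq {U W : (Fin k → ℤ) → ℝ} {f : ℂ[X]}
    (hf : f.natDegree ≠ 0)
    (h : ∀ z, (∀ t, z t ≠ 0) → (floquetMatrix k q U z).charpoly.roots.map f.eval =
      (floquetMatrix k q W z).charpoly.roots.map f.eval)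
    {a : Fin k → ℂ} (ha : ∀ t, a t ≠ 0) (hphase : ∀ n : Cell k q, phase n ⬝ᵥ a ≠ 0)
    (hinj : ∀ n m : Cell k q, (phase n ⬝ᵥ a) ^ f.natDegree = (phase m ⬝ᵥ a) ^ f.natDegree →
      phase n ⬝ᵥ a = phase m ⬝ᵥ a) (lam : ℂ) :
    ∀ᶠ s : ℝ in atTop,
      floquetDet k q U ((s : ℂ) • a) lam = floquetDet k q W ((s : ℂ) • a) lam := by
  have hlim : ∀ U : (Fin k → ℤ) → ℝ, Tendsto (fun s : ℝ => (s : ℂ)⁻¹ •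
      floquetMatrix k q U ((s : ℂ) • a)) atTop (𝓝 (Matrix.diagonal (phase · ⬝ᵥ a))) := fun U => by
    simpa only [floquetMatrix_eq, sub_zero] using tendsto_inv_smul_floquetMatrix_ray U a 0
  have hs0 : ∀ᶠ s : ℝ in atTop, (s : ℂ) ≠ 0 :=
    (eventually_ne_atTop 0).mono fun s hs => ofReal_ne_zero.2 hs
  filter_upwards [eventually_charpoly_eq tendsto_inv_ofReal_atTop
    (hs0.mono fun s hs => inv_ne_zero hs) (hlim U) (hlim W) hphase hf hinj
    (hs0.mono fun s hs => h _ fun t => mul_ne_zero hs (ha t))] with s hs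
  rw [floquetDet_eq_charpoly_eval, floquetDet_eq_charpoly_eval, hs]

/-- Along a generic ray the eigenvalues of both Floquet matrices grow like the numbers
`s * (phase n ⬝ᵥ a)`, whose ratios are not nontrivial roots of unity, so `f` separates them. -/
theorem floquetIsospectral_of_map_eval_roots_eq (hk : 2 ≤ k)
    (hco : Pairwise (Function.onFun Nat.Coprime q)) {U W : (Fin k → ℤ) → ℝ} {f : ℂ[X]}
    (hf : f.natDegree ≠ 0)
    (h : ∀ z, (∀ t, z t ≠ 0) → (floquetMatrix k q U z).charpoly.roots.map f.eval =
      (floquetMatrix k q W z).charpoly.roots.map f.eval) :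
    FloquetIsospectral k q U W := by
  intro z hz lam
  let u : Cell k q ⊕ {p : Cell k q × Cell k q // p.1 ≠ p.2} × nthRootsFinset f.natDegree (1 : ℂ) →
      Fin k → ℂ :=
    Sum.elim phase fun x => phase x.1.1.1 - (x.2 : ℂ) • phase x.1.1.2
  refine floquetDet_eq_of_generic_rays (u := u) ?_ (fun a ha hu => ?_) hz
  · rintro (n | ⟨⟨⟨n, m⟩, hnm⟩, ζ⟩) h0
    · exact phase_ne_zero n ⟨0, by omega⟩ (congrFun h0 _)
    · exact hnm (eq_of_phase_eq_smul_phase hk hco (sub_eq_zero.1 h0))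
  · have hphase : ∀ n : Cell k q, phase n ⬝ᵥ a ≠ 0 := fun n => hu (.inl n)
    refine eventually_floquetDet_ray_eq_of_map_eval_roots_eq hf h ha hphase (fun n m hpow => ?_) lam
    by_contra hne
    have hζ : (phase n ⬝ᵥ a) / (phase m ⬝ᵥ a) ∈ nthRootsFinset f.natDegree (1 : ℂ) := by
      rw [mem_nthRootsFinset hf.bot_lt, div_pow, hpow, div_self (pow_ne_zero _ (hphase m))]
    refine hu (.inr ⟨⟨(n, m), mt (congrArg (phase · ⬝ᵥ a)) hne⟩, _, hζ⟩) ?_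
    simp [u, sub_dotProduct, div_mul_cancel₀ _ (hphase m)]

end GenericRays

section LargeBlocks

variable {d k k' : ℕ} {q : Fin d → ℕ} {e : Fin k → Fin d} [∀ t, NeZero (q t)]

theorem eq_blockAverage_add_blockAverage {e' : Fin k' → Fin d}
    (he : Function.Bijective (Sum.elim e e')) {V : (Fin d → ℤ) → ℝ}
    (hV : IsPeriodicPotential d q V)
    (hm : ∀ l i i', (l (e i) : ZMod (q (e i))) ≠ 0 → (l (e' i') : ZMod (q (e' i'))) ≠ 0 →
      dft d q V l = 0) (x : Fin d → ℤ) :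
    V x = blockAverage q e V (x ∘ e) + (blockAverage q e' V (x ∘ e') - potentialAvg d q V) := by
  let e₂ : ∀ b : Bool, Fin (bif b then k' else k) → Fin d := Bool.rec e e'
  have he₂ : Function.Bijective fun p : Σ b, Fin (bif b then k' else k) => e₂ p.1 p.2 := by
    refine ⟨?_, fun t => ?_⟩
    · rintro ⟨_ | _, i⟩ ⟨_ | _, i'⟩ h
      · rw [Sum.inl_injective (@he.1 (.inl i) (.inl i') h)]
      · exact absurd (@he.1 (.inl i) (.inr i') h) Sum.inl_ne_inr
      · exact absurd (@he.1 (.inr i) (.inl i') h) Sum.inr_ne_inl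
      · rw [Sum.inr_injective (@he.1 (.inr i) (.inr i') h)]
    · obtain ⟨i | i, rfl⟩ := he.2 t
      exacts [⟨⟨false, i⟩, rfl⟩, ⟨⟨true, i⟩, rfl⟩]
  have hm₂ : MixedModesVanish q e₂ V := by
    rintro l (_ | _) (_ | _) i i' hne hi hi'
    exacts [absurd rfl hne, hm l i i' hi hi', hm l i' i hi' hi, absurd rfl hne]
  rw [eq_sum_blockAverage he₂ hV hm₂ x, Fintype.sum_bool, Fintype.card_bool]
  simp only [e₂]
  push_cast
  ring

variable {t₀ : Fin d} {lam : ℂ}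

theorem exists_map_eval_roots_eq (he : Function.Bijective (Sum.elim e fun _ : Fin 1 => t₀))
    {U W : (Fin k → ℤ) → ℝ} {U' W' : (Fin 1 → ℤ) → ℝ}
    (hiso : FloquetIsospectral 1 (q ∘ fun _ => t₀) U' W')
    (h : ∀ z, (∀ t, z t ≠ 0) →
      floquetDet d q (fun x => U (x ∘ e) + U' (x ∘ fun _ => t₀)) z lam =
        floquetDet d q (fun x => W (x ∘ e) + W' (x ∘ fun _ => t₀)) z lam) :
    ∃ f : ℂ[X], f.natDegree = q t₀ ∧ ∀ z, (∀ i, z i ≠ 0) →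
      (floquetMatrix k (q ∘ e) U z).charpoly.roots.map f.eval =
        (floquetMatrix k (q ∘ e) W z).charpoly.roots.map f.eval := by
  obtain ⟨f, hdeg, hf⟩ := exists_floquetDet_one_eq_add_eval (q := q ∘ fun _ => t₀) U' lam
  refine ⟨f, hdeg, fun z hz => multiset_eq_of_prod_map_add_eq fun E => ?_⟩
  obtain ⟨w, hw, hE⟩ := exists_floquetDet_one_eq (q := q ∘ fun _ => t₀) U' lam E
  let s := Equiv.ofBijective _ he
  let y : Fin d → ℂ := fun t => Sum.elim z (fun _ => w) (s.symm t)
  have hys : ∀ p, y (Sum.elim e (fun _ => t₀) p) = Sum.elim z (fun _ => w) p := fun p =>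
    congrArg _ (s.symm_apply_apply p)
  have hye : y ∘ e = z := funext fun i => hys (.inl i)
  have hyt : y ∘ (fun _ : Fin 1 => t₀) = fun _ => w := funext fun i => hys (.inr i)
  have hy : ∀ t, y t ≠ 0 := fun t => by
    obtain ⟨i | i, rfl⟩ := he.2 t
    exacts [(hys (.inl i)).trans_ne (hz i), (hys (.inr i)).trans_ne hw]
  have hprod := h y hy
  simp only [floquetDet_eq_prod_roots he, hye, hyt, ← hiso _ fun _ => hw, hf w hw, hE] at hprod
  simpa only [Multiset.map_map, Function.comp_def] using hprod

theorem floquetIsospectral_blockAverage_of_compl_singleton (hd : 3 ≤ d)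
    (hco : Pairwise (Function.onFun Nat.Coprime q)) {V Y : (Fin d → ℤ) → ℝ}
    (h : ∀ z, (∀ t, z t ≠ 0) → floquetDet d q V z lam = floquetDet d q Y z lam)
    (hV : IsPeriodicPotential d q V) (hY : IsPeriodicPotential d q Y)
    (he : Function.Bijective (Sum.elim e fun _ : Fin 1 => t₀))
    (hVm : ∀ l i, (l (e i) : ZMod (q (e i))) ≠ 0 → (l t₀ : ZMod (q t₀)) ≠ 0 → dft d q V l = 0)
    (hYm : ∀ l i, (l (e i) : ZMod (q (e i))) ≠ 0 → (l t₀ : ZMod (q t₀)) ≠ 0 → dft d q Y l = 0) :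
    FloquetIsospectral k (q ∘ e) (blockAverage q e V) (blockAverage q e Y) := by
  have hcard : k + 1 = d := by simpa using Fintype.card_of_bijective he
  have havg : potentialAvg d q V = potentialAvg d q Y := by
    simpa only [dft_zero, ofReal_inj] using dft_zero_eq_of_floquetDet_eq hd hco h
  have hcompl : (Set.range fun _ : Fin 1 => t₀)ᶜ.Nontrivial := by
    obtain ⟨t, ht, t', ht', hne⟩ := Finset.one_lt_card.1
      (show 1 < (Finset.univ.erase t₀).card by simp; omega)
    exact ⟨t, by simpa using ht, t', by simpa using ht', hne⟩
  have hpoint := (floquetIsospectral_blockAverage_of_nontrivial_compl hco h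
    (Function.injective_of_subsingleton _) hcompl).add_const (-potentialAvg d q V)
  simp only [← sub_eq_add_neg] at hpoint
  obtain ⟨f, hdeg, hf⟩ := exists_map_eval_roots_eq (W := blockAverage q e Y) he hpoint <| by
    intro z hz
    rw [← funext (eq_blockAverage_add_blockAverage he hV fun l i _ => hVm l i), havg,
      ← funext (eq_blockAverage_add_blockAverage he hY fun l i _ => hYm l i), h z hz]
  exact floquetIsospectral_of_map_eval_roots_eq (by omega)
    (hco.comp_of_injective (he.1.comp Sum.inl_injective)) (hdeg ▸ NeZero.ne (q t₀)) hf

end LargeBlocks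

section Rigidity

variable {d : ℕ} {q : Fin d → ℕ} {ι : Type*} {D : ι → ℕ} {e : ∀ j, Fin (D j) → Fin d}

theorem not_surjective_of_nontrivial [Nontrivial ι]
    (he : Function.Bijective fun p : Σ j, Fin (D j) => e p.1 p.2) (hD : ∀ j, 0 < D j) (j : ι) :
    ¬ Function.Surjective (e j) := fun h => by
  obtain ⟨j', hj'⟩ := exists_ne j
  exact notMem_range_of_ne he hj' ⟨0, hD j'⟩ (h _)

variable [∀ t, NeZero (q t)] {V Y : (Fin d → ℤ) → ℝ} {lam : ℂ}

theorem mixedModesVanish_of_floquetDet_eq (hd : 3 ≤ d)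
    (hco : Pairwise (Function.onFun Nat.Coprime q))
    (h : ∀ z, (∀ t, z t ≠ 0) → floquetDet d q V z lam = floquetDet d q Y z lam)
    (he : Function.Bijective fun p : Σ j, Fin (D j) => e p.1 p.2) (hY : MixedModesVanish q e Y) :
    MixedModesVanish q e V := by
  intro l j j' i i' hjj' hi hi'
  have hne : e j i ≠ e j' i' := fun heq => notMem_range_of_ne he hjj' i ⟨i', heq.symm⟩
  rw [← norm_eq_zero, norm_dft_eq_of_floquetDet_eq hd hco h hne hi hi',
    hY l j j' i i' hjj' hi hi', norm_zero]

theorem floquetIsospectral_blockAverage_of_mixedModesVanish (hd : 3 ≤ d)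
    (hco : Pairwise (Function.onFun Nat.Coprime q))
    (h : ∀ z, (∀ t, z t ≠ 0) → floquetDet d q V z lam = floquetDet d q Y z lam)
    (hV : IsPeriodicPotential d q V) (hY : IsPeriodicPotential d q Y)
    (he : Function.Bijective fun p : Σ j, Fin (D j) => e p.1 p.2)
    (hVm : MixedModesVanish q e V) (hYm : MixedModesVanish q e Y) {j : ι}
    (hj : ¬ Function.Surjective (e j)) :
    FloquetIsospectral (D j) (q ∘ e j) (blockAverage q (e j) V) (blockAverage q (e j) Y) := by
  have hinj := injective_of_bijective_sigma he j
  obtain hsub | hnontriv := (Set.range (e j))ᶜ.subsingleton_or_nontrivial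
  · obtain ⟨t₀, ht₀⟩ := Set.nonempty_compl.2 (mt Set.range_eq_univ.1 hj)
    have hbij : Function.Bijective (Sum.elim (e j) fun _ : Fin 1 => t₀) := by
      refine ⟨hinj.sumElim (Function.injective_of_subsingleton _) fun i _ hi => ht₀ ⟨i, hi⟩,
        fun t => ?_⟩
      by_cases ht : t ∈ Set.range (e j)
      · exact ht.imp' Sum.inl fun _ hi => hi
      · exact ⟨.inr 0, hsub ht₀ ht⟩
    obtain ⟨⟨j', i'⟩, rfl⟩ := he.2 t₀
    have hjj' : j ≠ j' := by
      rintro rfl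
      exact ht₀ ⟨i', rfl⟩
    exact floquetIsospectral_blockAverage_of_compl_singleton hd hco h hV hY hbij
      (fun l i => hVm l j j' i i' hjj') fun l i => hYm l j j' i i' hjj'
  · exact floquetIsospectral_blockAverage_of_nontrivial_compl hco h hinj hnontriv

theorem fermi_isospectral_separable_rigidity_with_floquet_general [Fintype ι] (hd : 3 ≤ d)
    (hco : Pairwise (Function.onFun Nat.Coprime q))
    (he : Function.Bijective fun p : Σ j, Fin (D j) => e p.1 p.2)
    (hproper : ∀ j, ¬ Function.Surjective (e j))
    (hV : IsPeriodicPotential d q V) (hY : IsPeriodicPotential d q Y)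
    (hF : ∀ z, (∀ t, z t ≠ 0) → floquetDet d q V z lam = 0 → floquetDet d q Y z lam = 0)
    {Yj : ∀ j, (Fin (D j) → ℤ) → ℝ} (hYsep : ∀ x, Y x = ∑ j, Yj j (x ∘ e j)) :
    ∃ Vj : ∀ j, (Fin (D j) → ℤ) → ℝ, (∀ x, V x = ∑ j, Vj j (x ∘ e j)) ∧
      ∀ j, ∃ C : ℝ, FloquetIsospectral (D j) (q ∘ e j) (fun m => Vj j m + C) (Yj j) := by
  have hdet : ∀ z, (∀ t, z t ≠ 0) → floquetDet d q V z lam = floquetDet d q Y z lam :=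
    fun z => floquetDet_eq_of_zeros_subset hd hco hF
  have hYm : MixedModesVanish q e Y := mixedModesVanish_of_separable he hYsep
  have hVm : MixedModesVanish q e V := mixedModesVanish_of_floquetDet_eq hd hco hdet he hYm
  let c : ℝ := (1 - Fintype.card ι) / Fintype.card ι * potentialAvg d q V
  refine ⟨fun j m => blockAverage q (e j) V m + c, fun x => ?_, fun j => ?_⟩
  · have hι : (Fintype.card ι : ℝ) ≠ 0 := by
      have : Nonempty ι := ⟨(he.2 ⟨0, by omega⟩).choose.1⟩
      exact Nat.cast_ne_zero.2 Fintype.card_ne_zero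
    rw [eq_sum_blockAverage he hV hVm x, Finset.sum_add_distrib, Finset.sum_const,
      Finset.card_univ, nsmul_eq_mul, ← mul_assoc, mul_div_cancel₀ _ hι]
  · obtain ⟨κ, hκ⟩ := blockAverage_of_separable (q := q) he hYsep j
    refine ⟨-κ - c, ?_⟩
    have hiso := (floquetIsospectral_blockAverage_of_mixedModesVanish hd hco hdet hV hY he hVm hYm
      (hproper j)).add_const (-κ)
    convert hiso using 2 with m m
    · ring
    · rw [hκ, add_neg_cancel_right]

end Rigidity

/-- Theorem 1.5: if `V` and `Y` are Fermi isospectral and `Y = ⊕ Y_j` is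
separable, then `V = ⊕ V_j` is separable and, up to a constant, `V_j` and `Y_j` are Floquet
isospectral. -/
theorem fermi_isospectral_separable_rigidity_with_floquet
    (d r : ℕ) (hd : 3 ≤ d) (hr : 2 ≤ r)
    (q : Fin d → ℕ) (hq : ∀ j, 0 < q j)
    (hco : ∀ i j : Fin d, i ≠ j → Nat.Coprime (q i) (q j))
    (D : Fin r → ℕ) (hD : ∀ j, 1 ≤ D j) (hsum : ∑ j, D j = d)
    (V Y : (Fin d → ℤ) → ℝ)
    (hVper : IsPeriodicPotential d q V) (hYper : IsPeriodicPotential d q Y)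
    (hFermi : FermiIsospectral d q V Y)
    (Yj : (j : Fin r) → (Fin (D j) → ℤ) → ℝ)
    (hYsep : ∀ n : Fin d → ℤ, Y n = ∑ j, Yj j (fun i => n (blockEmbed D hsum j i))) :
    ∃ Vj : (j : Fin r) → (Fin (D j) → ℤ) → ℝ,
      (∀ n : Fin d → ℤ, V n = ∑ j, Vj j (fun i => n (blockEmbed D hsum j i))) ∧
      ∀ j : Fin r, ∃ C : ℝ,
        FloquetIsospectral (D j) (fun i => q (blockEmbed D hsum j i))
          (fun m => Vj j m + C) (Yj j) := by
  have : ∀ t, NeZero (q t) := fun t => ⟨(hq t).ne'⟩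
  have : Nontrivial (Fin r) := Fin.nontrivial_iff_two_le.2 hr
  obtain ⟨lam0, hlam0⟩ := hFermi
  have he := bijective_blockEmbed D hsum
  exact fermi_isospectral_separable_rigidity_with_floquet_general hd hco he
    (not_surjective_of_nontrivial he hD) hVper hYper
    (fun z hz h0 => (hlam0.subset ⟨hz, h0⟩).2) hYsep

end
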